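/- arXiv:1305.6270 — 6 statements merged into one kernel-verified Lean document; each statement's English description precedes it below -/
import Mathlib

section
/- Let Λ ⊂ ℤ^d be a finite rectangular box with an even number of sites, invariant under the reflection θ, and let (c_i)_{i∈Λ} be a Majorana family indexed by Λ. Assume the couplings satisfy J_{(θi θj)} = J_{(ij)} for every bond. Let C = (i_1, …, i_{2L}) be a non-degenerate loop satisfying θ i_k = i_{2L+1−k} for all k (so that θ(C) = −C and C crosses the reflection hyperplane). Then the minimum over all antisymmetric sign assignments u of the least eigenvalue Ẽ_0(u) of H̃_u is attained at some sign assignment u* for which the loop C is vortex-free, i.e. −∏_{(ij)∈C} u*_{ij} = 1. -/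
noncomputable section
open scoped Classical

/-- A Majorana family indexed by `S`: self-adjoint operators on a nonzero
finite-dimensional complex Hilbert space satisfying the Clifford relations
`cᵢcⱼ + cⱼcᵢ = 2δᵢⱼ·I`. -/
def IsMajoranaFamily {V : Type*} [NormedAddCommGroup V] [InnerProductSpace ℂ V]
    [FiniteDimensional ℂ V] {S : Type*} (c : S → (V →ₗ[ℂ] V)) : Prop :=
  (∀ i, IsSelfAdjoint (c i)) ∧
    ∀ i j, c i * c j + c j * c i = if i = j then (2 : ℂ) • (1 : V →ₗ[ℂ] V) else 0

/-- The least real eigenvalue of an endomorphism. -/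
def leastEig {W : Type*} [AddCommGroup W] [Module ℂ W] (H : W →ₗ[ℂ] W) : ℝ :=
  sInf {t : ℝ | Module.End.HasEigenvalue H (t : ℂ)}

/-- Two operators anticommute. -/
def AntiCommute {A : Type*} [Ring A] (a b : A) : Prop := a * b = -(b * a)

/-- `i` and `j` are nearest neighbors in the cubic lattice `ℤ^d`. -/
def IsNN {d : ℕ} (i j : Fin d → ℤ) : Prop := (∑ k, (i k - j k).natAbs) = 1

/-- `u` is an antisymmetric sign assignment on the nearest-neighbor (ordered) pairs
of `Λ`: `u_{ij} = -u_{ji} = ±1`. -/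
def IsSignAssignment {d : ℕ} (Λ : Finset (Fin d → ℤ))
    (u : (Fin d → ℤ) → (Fin d → ℤ) → ℤ) : Prop :=
  ∀ i ∈ Λ, ∀ j ∈ Λ, IsNN i j → (u i j = 1 ∨ u i j = -1) ∧ u i j = -u j i

/-- The Hamiltonian `H̃_u = Σ_{(ij)} J_{(ij)} u_{ij} i c_i c_j`, each unordered
nearest-neighbor bond of `Λ` counted once (hence the factor `1/2` in front of the sum
over ordered pairs; the two terms of an unordered bond agree since `J` is symmetric,
`u` is antisymmetric and `c_i c_j = -c_j c_i`). -/
def cubicH {V : Type*} [NormedAddCommGroup V] [InnerProductSpace ℂ V]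
    [FiniteDimensional ℂ V] {d : ℕ} (Λ : Finset (Fin d → ℤ))
    (J : (Fin d → ℤ) → (Fin d → ℤ) → ℝ) (u : (Fin d → ℤ) → (Fin d → ℤ) → ℤ)
    (c : (Fin d → ℤ) → (V →ₗ[ℂ] V)) : V →ₗ[ℂ] V :=
  (2 : ℂ)⁻¹ • ∑ i ∈ Λ, ∑ j ∈ Λ,
    if IsNN i j then ((J i j * (u i j : ℝ) : ℝ) : ℂ) • (Complex.I • (c i * c j)) else 0

section Aux
set_option linter.unusedSectionVars false
set_option linter.unusedVariables false
variable {V : Type*} [NormedAddCommGroup V] [InnerProductSpace ℂ V] [FiniteDimensional ℂ V]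

/-- Rayleigh quotient description of the least eigenvalue. -/
theorem leastEig_spec [Nontrivial V] (H : V →ₗ[ℂ] V) (hH : H.IsSymmetric) :
    (∃ ψ : V, ‖ψ‖ = 1 ∧ H ψ = ((leastEig H : ℝ) : ℂ) • ψ) ∧
    ∀ ψ : V, leastEig H * ‖ψ‖ ^ 2 ≤ (inner ℂ ψ (H ψ)).re := by
  set μ : ℝ := ⨅ x : { x : V // x ≠ 0 }, RCLike.re (inner ℂ (H x) (x : V)) / ‖(x : V)‖ ^ 2 with hμ
  have h1 : Module.End.HasEigenvalue H (μ : ℂ) := hH.hasEigenvalue_iInf_of_finiteDimensional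
  have hbdd : BddBelow (Set.range fun x : { x : V // x ≠ 0 } =>
      RCLike.re (inner ℂ (H x) (x : V)) / ‖(x : V)‖ ^ 2) := by
    refine ⟨-‖LinearMap.toContinuousLinearMap H‖, ?_⟩
    rintro _ ⟨⟨x, hx⟩, rfl⟩
    have hx' : 0 < ‖x‖ := norm_pos_iff.mpr hx
    have h2 := (LinearMap.toContinuousLinearMap H).le_opNorm x
    have h3 := norm_inner_le_norm (𝕜 := ℂ) (H x) x
    have h4 := RCLike.abs_re_le_norm (inner ℂ (H x) x)
    have h5 := neg_abs_le (RCLike.re (inner ℂ (H x) x))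
    simp only [LinearMap.coe_toContinuousLinearMap'] at h2
    simp only
    rw [le_div_iff₀ (by positivity)]
    nlinarith [mul_le_mul_of_nonneg_right h2 hx'.le]
  have h2 : ∀ ψ : V, μ * ‖ψ‖ ^ 2 ≤ (inner ℂ ψ (H ψ)).re := by
    intro ψ
    by_cases h : ψ = 0
    · simp [h]
    · have := ciInf_le hbdd ⟨ψ, h⟩
      have hx' : 0 < ‖ψ‖ := norm_pos_iff.mpr h
      rw [← hμ] at this
      simp only at this
      rw [le_div_iff₀ (by positivity)] at this
      rw [hH ψ ψ] at this
      exact this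
  have h3 : leastEig H = μ := by
    apply IsLeast.csInf_eq
    refine ⟨h1, ?_⟩
    intro t ht
    obtain ⟨x, hx⟩ := Module.End.HasEigenvalue.exists_hasEigenvector ht
    have hx0 := hx.2
    have hx' : 0 < ‖x‖ := norm_pos_iff.mpr hx0
    have h4 := h2 x
    rw [hx.apply_eq_smul, inner_smul_right, inner_self_eq_norm_sq_to_K] at h4
    have h5 : ((t : ℂ) * (((‖x‖ : ℝ) : ℂ) ^ 2)).re = t * ‖x‖ ^ 2 := by
      rw [← Complex.ofReal_pow, ← Complex.ofReal_mul, Complex.ofReal_re]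
    erw [h5] at h4
    exact le_of_mul_le_mul_right h4 (by positivity)
  rw [h3]
  refine ⟨?_, h2⟩
  obtain ⟨x, hx⟩ := Module.End.HasEigenvalue.exists_hasEigenvector h1
  have hx' : ‖x‖ ≠ 0 := norm_ne_zero_iff.mpr hx.2
  refine ⟨((‖x‖⁻¹ : ℝ) : ℂ) • x, ?_, ?_⟩
  · rw [norm_smul]; simp [hx']
  · rw [map_smul, hx.apply_eq_smul, smul_comm]

/-- Quadratic Majorana Hamiltonian. -/
def quadH {n : Type*} [Fintype n] (A : Matrix n n ℝ) (c : n → (V →ₗ[ℂ] V)) : V →ₗ[ℂ] V :=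
  (2 : ℂ)⁻¹ • ∑ i, ∑ j, ((A i j : ℝ) : ℂ) • (Complex.I • (c i * c j))

/-- Covariance matrix of a state. -/
def covar {n : Type*} (c : n → (V →ₗ[ℂ] V)) (ψ : V) : Matrix n n ℝ :=
  fun i j => -(inner ℂ (c i ψ) (c j ψ)).im

theorem covar_antisymm {n : Type*} (c : n → (V →ₗ[ℂ] V)) (ψ : V) (i j : n) :
    covar c ψ i j = - covar c ψ j i := by
  unfold covar
  rw [← inner_conj_symm, Complex.conj_im]

variable {n : Type*} [Fintype n]

theorem maj_sym (c : n → (V →ₗ[ℂ] V)) (hc : IsMajoranaFamily c) (i : n) (x y : V) :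
    inner ℂ (c i x) y = inner ℂ x (c i y) :=
  (LinearMap.isSymmetric_iff_isSelfAdjoint _).2 (hc.1 i) x y

theorem maj_re (c : n → (V →ₗ[ℂ] V)) (hc : IsMajoranaFamily c) (i j : n) (ψ : V) :
    (inner ℂ (c i ψ) (c j ψ)).re = if i = j then ‖ψ‖ ^ 2 else 0 := by
  have h := congrArg (fun f : V →ₗ[ℂ] V => inner ℂ ψ (f ψ)) (hc.2 i j)
  simp only [LinearMap.add_apply, Module.End.mul_apply, inner_add_right] at h
  rw [← maj_sym c hc i ψ (c j ψ), ← maj_sym c hc j ψ (c i ψ)] at h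
  have h2 : (inner ℂ (c j ψ) (c i ψ)).re = (inner ℂ (c i ψ) (c j ψ)).re := by
    rw [← inner_conj_symm, Complex.conj_re]
  have h3 := congrArg Complex.re h
  rw [Complex.add_re, h2] at h3
  split_ifs at h3 ⊢ with hij
  · have h5 : (inner ℂ ψ (((2 : ℂ) • (1 : V →ₗ[ℂ] V)) ψ)).re = 2 * ‖ψ‖ ^ 2 := by
      rw [LinearMap.smul_apply, inner_smul_right, Module.End.one_apply, inner_self_eq_norm_sq_to_K]
      erw [← Complex.ofReal_pow]
      simp [-Complex.ofReal_pow]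
    linarith
  · simp at h3; linarith

theorem maj_inner (c : n → (V →ₗ[ℂ] V)) (hc : IsMajoranaFamily c) (i j : n) (ψ : V) :
    inner ℂ (c i ψ) (c j ψ) =
      (((if i = j then ‖ψ‖ ^ 2 else 0 : ℝ)) : ℂ) - Complex.I * ((covar c ψ i j : ℝ) : ℂ) := by
  apply Complex.ext
  · rw [maj_re c hc]; simp
  · simp [covar]

theorem quadH_symm (c : n → (V →ₗ[ℂ] V)) (hc : IsMajoranaFamily c) (A : Matrix n n ℝ)
    (hA : ∀ i j, A i j = - A j i) : (quadH A c).IsSymmetric := by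
  intro x y
  unfold quadH
  simp only [LinearMap.smul_apply, LinearMap.sum_apply, Module.End.mul_apply, inner_smul_left,
    inner_smul_right, sum_inner, inner_sum]
  rw [Finset.sum_comm]
  simp only [maj_sym c hc]
  congr 1
  · rw [show (2 : ℂ)⁻¹ = ((2⁻¹ : ℝ) : ℂ) by push_cast; rfl, Complex.conj_ofReal]
  · refine Finset.sum_congr rfl fun i _ => Finset.sum_congr rfl fun j _ => ?_
    rw [hA j i]
    simp

theorem quadH_energy (c : n → (V →ₗ[ℂ] V)) (hc : IsMajoranaFamily c) (A : Matrix n n ℝ)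
    (hA : ∀ i j, A i j = - A j i) (ψ : V) :
    (inner ℂ ψ (quadH A c ψ)).re = 2⁻¹ * ∑ i, ∑ j, A i j * covar c ψ i j := by
  have hs : ∀ i j, inner ℂ ψ (c i (c j ψ)) = (((if i = j then ‖ψ‖ ^ 2 else 0 : ℝ)) : ℂ) -
      Complex.I * ((covar c ψ i j : ℝ) : ℂ) := by
    intro i j
    rw [← maj_inner c hc, maj_sym c hc]
  unfold quadH
  simp only [LinearMap.smul_apply, LinearMap.sum_apply, Module.End.mul_apply,
    inner_smul_right, inner_sum, hs]
  rw [show (2 : ℂ)⁻¹ = ((2⁻¹ : ℝ) : ℂ) by push_cast; rfl, Complex.re_ofReal_mul]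
  congr 1
  rw [Complex.re_sum]
  refine Finset.sum_congr rfl fun i _ => ?_
  rw [Complex.re_sum]
  refine Finset.sum_congr rfl fun j _ => ?_
  rw [Complex.re_ofReal_mul]
  congr 1
  simp [-Complex.ofReal_pow]

/-- The covariance matrix of a unit vector is a contraction. -/
theorem covar_contr (c : n → (V →ₗ[ℂ] V)) (hc : IsMajoranaFamily c) (ψ : V) (hψ : ‖ψ‖ = 1)
    (y : n → ℝ) :
    (covar c ψ).mulVec y ⬝ᵥ (covar c ψ).mulVec y ≤ y ⬝ᵥ y := by
  set G := covar c ψ with hG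
  have key : ∀ x y : n → ℝ, 0 ≤ x ⬝ᵥ x + y ⬝ᵥ y + 2 * (x ⬝ᵥ G.mulVec y) := by
    intro x y
    have hin : ∀ x y : n → ℝ, inner ℂ (∑ i, ((x i : ℝ) : ℂ) • c i ψ) (∑ i, ((y i : ℝ) : ℂ) • c i ψ)
        = ((x ⬝ᵥ y : ℝ) : ℂ) - Complex.I * ((x ⬝ᵥ G.mulVec y : ℝ) : ℂ) := by
      intro x y
      simp only [sum_inner, inner_sum, inner_smul_left, inner_smul_right, maj_inner c hc, hψ]
      simp only [dotProduct, Matrix.mulVec, Complex.ofReal_sum, Finset.mul_sum, Complex.conj_ofReal]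
      have e : ((∑ i, x i * y i : ℝ) : ℂ) = ∑ i, ∑ j, (x i : ℂ) * (y j : ℂ) * (((if i = j then 1 else 0 : ℝ)) : ℂ) := by
        rw [Complex.ofReal_sum]
        refine Finset.sum_congr rfl fun i _ => ?_
        rw [Finset.sum_eq_single i]
        · simp
        · intro b _ hb; simp [hb.symm]
        · simp
      rw [Complex.ofReal_sum] at e
      rw [e, Finset.sum_comm (γ := n), ← Finset.sum_sub_distrib]
      refine Finset.sum_congr rfl fun i _ => ?_
      rw [← Finset.sum_sub_distrib]
      refine Finset.sum_congr rfl fun j _ => ?_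
      push_cast
      simp only [one_pow]
      ring
    have hself : ∀ x : n → ℝ, x ⬝ᵥ G.mulVec x = 0 := by
      intro x
      have : x ⬝ᵥ G.mulVec x = - (x ⬝ᵥ G.mulVec x) := by
        simp only [dotProduct, Matrix.mulVec, Finset.mul_sum]
        conv_rhs => rw [Finset.sum_comm]
        rw [← Finset.sum_neg_distrib]
        refine Finset.sum_congr rfl fun i _ => ?_
        rw [← Finset.sum_neg_distrib]
        refine Finset.sum_congr rfl fun j _ => ?_
        rw [hG, covar_antisymm c ψ i j]; ring
      linarith
    set φ := (∑ i, ((x i : ℝ) : ℂ) • c i ψ)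
    set χ := (∑ i, ((y i : ℝ) : ℂ) • c i ψ)
    have h0 : 0 ≤ (inner ℂ (φ + Complex.I • χ) (φ + Complex.I • χ)).re :=
      inner_self_nonneg (𝕜 := ℂ)
    have hyx : y ⬝ᵥ G.mulVec x = - (x ⬝ᵥ G.mulVec y) := by
      have := hself (x + y)
      simp only [Matrix.mulVec_add, dotProduct_add, add_dotProduct, hself] at this
      linarith
    simp only [inner_add_left, inner_add_right, inner_smul_left, inner_smul_right] at h0
    rw [hin x x, hin x y, hin y x, hin y y, hself, hself, hyx] at h0
    simp at h0
    linarith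
  have := key (-(G.mulVec y)) y
  simp only [neg_dotProduct, dotProduct_neg] at this
  linarith

/-- Pairwise anticommuting operators (each squaring to zero) have a common kernel vector. -/
theorem common_kernel [Nontrivial V] {m : Type*} (a : m → (V →ₗ[ℂ] V))
    (ha : ∀ i j, a i * a j + a j * a i = 0) (s : Finset m) :
    ∃ ψ : V, ψ ≠ 0 ∧ ∀ i ∈ s, a i ψ = 0 := by
  induction s using Finset.induction_on with
  | empty => obtain ⟨x, hx⟩ := exists_ne (0 : V); exact ⟨x, hx, by simp⟩
  | insert k s hk ih =>
    obtain ⟨ψ, h0, h⟩ := ih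
    by_cases hz : a k ψ = 0
    · exact ⟨ψ, h0, by simpa [hz] using h⟩
    · refine ⟨a k ψ, hz, ?_⟩
      intro i hi
      have hh : a i (a k ψ) + a k (a i ψ) = 0 := by
        simpa using congrArg (fun f : V →ₗ[ℂ] V => f ψ) (ha i k)
      rcases Finset.mem_insert.1 hi with rfl | hi
      · have : (2 : ℂ) • a i (a i ψ) = 0 := by rw [two_smul]; exact hh
        simpa using this
      · simpa [h i hi] using hh

/-- Every orthogonal antisymmetric matrix is a covariance matrix; variational upper bound. -/
theorem leastEig_le [DecidableEq n] [Nontrivial V] (c : n → (V →ₗ[ℂ] V)) (hc : IsMajoranaFamily c)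
    (A : Matrix n n ℝ) (hA : ∀ i j, A i j = - A j i) (O : Matrix n n ℝ)
    (hO : ∀ i j, O i j = - O j i) (hOO : O * O = -1) :
    leastEig (quadH A c) ≤ 2⁻¹ * ∑ i, ∑ j, A i j * O i j := by
  let a : n → (V →ₗ[ℂ] V) := fun i => c i - Complex.I • ∑ j, ((O i j : ℝ) : ℂ) • c j
  have ha : ∀ i k, a i * a k + a k * a i = 0 := by
    intro i k
    have h1 : ∀ i k, c i * (∑ j, ((O k j : ℝ) : ℂ) • c j) + (∑ j, ((O k j : ℝ) : ℂ) • c j) * c i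
        = (2 * (O k i : ℂ)) • (1 : V →ₗ[ℂ] V) := by
      intro i k
      rw [Finset.mul_sum, Finset.sum_mul, ← Finset.sum_add_distrib]
      simp only [mul_smul_comm, smul_mul_assoc, ← smul_add, hc.2]
      simp only [smul_ite, smul_zero, smul_smul]
      simp [mul_comm]
    have h2 : (∑ j, ((O i j : ℝ) : ℂ) • c j) * (∑ j, ((O k j : ℝ) : ℂ) • c j)
        + (∑ j, ((O k j : ℝ) : ℂ) • c j) * (∑ j, ((O i j : ℝ) : ℂ) • c j)
        = if i = k then (2 : ℂ) • (1 : V →ₗ[ℂ] V) else 0 := by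
      rw [Finset.sum_mul, Finset.mul_sum, ← Finset.sum_add_distrib]
      simp only [mul_smul_comm, smul_mul_assoc, ← smul_add, h1]
      simp only [smul_smul, ← Finset.sum_smul]
      have h3 := congrFun (congrFun hOO i) k
      rw [Matrix.mul_apply] at h3
      have h4 : ∑ j, O i j * O k j = if i = k then 1 else 0 := by
        have : ∑ j, O i j * O k j = - ∑ j, O i j * O j k := by
          rw [← Finset.sum_neg_distrib]
          refine Finset.sum_congr rfl fun j _ => ?_
          rw [hO k j]; ring
        rw [this, h3, Matrix.neg_apply, neg_neg, Matrix.one_apply]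
      have h5 : ∑ j, (O i j : ℂ) * (2 * (O k j : ℂ)) = 2 * ((if i = k then 1 else 0 : ℝ) : ℂ) := by
        rw [← h4, Complex.ofReal_sum, Finset.mul_sum]
        refine Finset.sum_congr rfl fun j _ => ?_
        push_cast; ring
      rw [h5]
      split_ifs <;> simp
    have h6 := h1 i k
    have h7 := h1 k i
    have h8 := hc.2 i k
    simp only [a]
    set X := ∑ j, ((O i j : ℝ) : ℂ) • c j
    set Y := ∑ j, ((O k j : ℝ) : ℂ) • c j
    have e : (c i - Complex.I • X) * (c k - Complex.I • Y) + (c k - Complex.I • Y) * (c i - Complex.I • X)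
        = (c i * c k + c k * c i) - Complex.I • (c i * Y + Y * c i)
          - Complex.I • (c k * X + X * c k) - (X * Y + Y * X) := by
      simp only [sub_mul, mul_sub, smul_mul_assoc, mul_smul_comm, smul_sub, smul_smul,
        Complex.I_mul_I, smul_add, neg_smul, one_smul]
      abel
    rw [e, h6, h7, h8, h2, hO k i]
    by_cases hik : i = k <;> simp [hik]
  obtain ⟨ψ, hψ0, hψ⟩ := common_kernel a ha Finset.univ
  have hcov : ∀ k i, covar c ψ k i = ‖ψ‖ ^ 2 * O k i := by
    intro k i
    have h := hψ i (Finset.mem_univ i)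
    simp only [a, LinearMap.sub_apply, LinearMap.smul_apply, LinearMap.sum_apply] at h
    rw [sub_eq_zero] at h
    have h1 : covar c ψ k i = -(inner ℂ (c k ψ) (c i ψ)).im := rfl
    rw [h1, h]
    simp only [inner_smul_right, inner_sum, maj_inner c hc]
    rw [Complex.I_mul_im, Complex.re_sum]
    simp only [Complex.re_ofReal_mul]
    simp [-Complex.ofReal_pow]
    rw [hO i k]; ring
  have h1 := (leastEig_spec (quadH A c) (quadH_symm c hc A hA)).2 ψ
  rw [quadH_energy c hc A hA] at h1
  have hx' : 0 < ‖ψ‖ := norm_pos_iff.mpr hψ0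
  have h2 : 2⁻¹ * ∑ i, ∑ j, A i j * covar c ψ i j = (2⁻¹ * ∑ i, ∑ j, A i j * O i j) * ‖ψ‖ ^ 2 := by
    rw [mul_assoc, Finset.sum_mul]
    congr 1
    refine Finset.sum_congr rfl fun i _ => ?_
    rw [Finset.sum_mul]
    refine Finset.sum_congr rfl fun j _ => ?_
    rw [hcov]; ring
  rw [h2] at h1
  exact le_of_mul_le_mul_right h1 (by positivity)

end Aux

section Mat
open Matrix
variable {n : Type*} [Fintype n] [DecidableEq n]

theorem exists_sqrt (P : Matrix n n ℝ) (hP : Pᵀ = -P)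
    (hc : ∀ y : n → ℝ, P *ᵥ y ⬝ᵥ P *ᵥ y ≤ y ⬝ᵥ y) :
    ∃ T : Matrix n n ℝ, T.PosSemidef ∧ T * T = 1 + P * P ∧ T * P = P * T := by
  have hN : (1 + P * P).PosSemidef := by
    refine Matrix.PosSemidef.of_dotProduct_mulVec_nonneg ?_ ?_
    · rw [Matrix.IsHermitian, conjTranspose_eq_transpose_of_trivial]
      simp [hP]
    · intro x
      have h1 : x ⬝ᵥ (P * P) *ᵥ x = - (P *ᵥ x ⬝ᵥ P *ᵥ x) := by
        rw [← Matrix.mulVec_mulVec, Matrix.dotProduct_mulVec, ← Matrix.mulVec_transpose, hP,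
          Matrix.neg_mulVec, neg_dotProduct]
      rw [star_trivial, Matrix.add_mulVec, dotProduct_add, h1, Matrix.one_mulVec]
      linarith [hc x]
  open scoped MatrixOrder in
  refine ⟨CFC.sqrt (1 + P * P), (CFC.sqrt_nonneg _).posSemidef, CFC.sqrt_mul_sqrt_self _ hN.nonneg, ?_⟩
  open scoped MatrixOrder in
  have : Commute (1 + P * P) P := by
    simp [Commute, SemiconjBy, add_mul, mul_add, mul_assoc]
  open scoped MatrixOrder in
  rw [CFC.sqrt_eq_cfc]
  open scoped MatrixOrder in
  exact (this.cfc_nnreal _).eq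

theorem psd_of_sq_le (K T : Matrix n n ℝ) (hK : Kᵀ = K) (hT : T.PosSemidef)
    (h : ∀ y : n → ℝ, K *ᵥ y ⬝ᵥ K *ᵥ y ≤ T *ᵥ y ⬝ᵥ T *ᵥ y) (x : n → ℝ) :
    0 ≤ x ⬝ᵥ (T - K) *ᵥ x := by
  have hH : (T - K).IsHermitian := by
    refine hT.1.sub ?_
    rw [Matrix.IsHermitian, conjTranspose_eq_transpose_of_trivial, hK]
  have hps : (T - K).PosSemidef := by
    rw [hH.posSemidef_iff_eigenvalues_nonneg]
    intro k
    by_contra hneg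
    simp only [Pi.zero_apply, not_le] at hneg
    set y : n → ℝ := (hH.eigenvectorBasis k).ofLp with hy
    have h1 : (T - K) *ᵥ y = hH.eigenvalues k • y := hH.mulVec_eigenvectorBasis k
    have hy0 : 0 < y ⬝ᵥ y := by
      have h0 : y ≠ 0 := by
        intro h0
        apply hH.eigenvectorBasis.orthonormal.ne_zero k
        ext i
        exact congrFun h0 i
      have := (dotProduct_star_self_pos_iff (v := y)).2 h0
      simpa using this
    have h2 : K *ᵥ y = T *ᵥ y - hH.eigenvalues k • y := by
      rw [← h1, Matrix.sub_mulVec]; abel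
    have h3 := h y
    have h4 : 0 ≤ y ⬝ᵥ T *ᵥ y := by simpa using hT.dotProduct_mulVec_nonneg y
    rw [h2] at h3
    simp only [sub_dotProduct, dotProduct_sub, smul_dotProduct, dotProduct_smul, smul_eq_mul] at h3
    rw [dotProduct_comm (T *ᵥ y) y] at h3
    have h5 : 0 < hH.eigenvalues k * (hH.eigenvalues k * (y ⬝ᵥ y)) := by
      rw [← mul_assoc]; exact mul_pos (mul_pos_of_neg_of_neg hneg hneg) hy0
    nlinarith [mul_nonneg (neg_nonneg.2 hneg.le) h4]
  simpa using hps.dotProduct_mulVec_nonneg x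

theorem offdiag_bound (Q T R : Matrix n n ℝ) (hT : T.PosSemidef) (hR : R.PosSemidef)
    (h1 : ∀ y : n → ℝ, Qᵀ *ᵥ y ⬝ᵥ Qᵀ *ᵥ y ≤ T *ᵥ y ⬝ᵥ T *ᵥ y)
    (h2 : ∀ y : n → ℝ, Q *ᵥ y ⬝ᵥ Q *ᵥ y ≤ R *ᵥ y ⬝ᵥ R *ᵥ y) (i : n) :
    2 * |Q i i| ≤ T i i + R i i := by
  have hTT : (fromBlocks T 0 0 R).PosSemidef := by
    refine Matrix.PosSemidef.of_dotProduct_mulVec_nonneg ?_ ?_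
    · rw [Matrix.isHermitian_fromBlocks_iff]
      exact ⟨hT.1, by simp, by simp, hR.1⟩
    · intro x
      rw [star_trivial, fromBlocks_mulVec, ← Sum.elim_comp_inl_inr x, sumElim_dotProduct_sumElim]
      have a1 := hT.dotProduct_mulVec_nonneg (x ∘ Sum.inl)
      have a2 := hR.dotProduct_mulVec_nonneg (x ∘ Sum.inr)
      simp only [star_trivial] at a1 a2
      simpa using add_nonneg a1 a2
  have key := psd_of_sq_le (fromBlocks 0 Q Qᵀ 0) (fromBlocks T 0 0 R)
    (by simp [fromBlocks_transpose]) hTT (by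
      intro y
      rw [fromBlocks_mulVec, fromBlocks_mulVec, sumElim_dotProduct_sumElim,
        sumElim_dotProduct_sumElim]
      simp only [zero_mulVec, zero_add, add_zero]
      linarith [h1 (y ∘ Sum.inl), h2 (y ∘ Sum.inr)])
  have e : ∀ s : ℝ, s * s = 1 → 0 ≤ T i i + R i i - 2 * (s * Q i i) := by
    intro s hs
    have k := key (Sum.elim (Pi.single i 1) (Pi.single i s))
    rw [sub_mulVec, dotProduct_sub, fromBlocks_mulVec, fromBlocks_mulVec,
      sumElim_dotProduct_sumElim, sumElim_dotProduct_sumElim] at k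
    simp only [Sum.elim_comp_inl, Sum.elim_comp_inr,
      single_dotProduct, mulVec_single, one_mul] at k
    simp at k
    rw [← mul_assoc, hs] at k
    linarith
  have e1 := e 1 (by norm_num)
  have e2 := e (-1) (by norm_num)
  rcases abs_cases (Q i i) with h | h <;> linarith [h.1]

end Mat

section Abs
set_option linter.unusedSectionVars false
open Matrix
variable {V : Type*} [NormedAddCommGroup V] [InnerProductSpace ℂ V] [FiniteDimensional ℂ V]
variable {S : Type*} [Fintype S] [DecidableEq S]

/-- The crossing block. -/
def crossB (D w : S → ℝ) : Matrix S S ℝ := diagonal fun i => D i * w i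

/-- The reflected block. -/
def reflB (w : S → ℝ) (A : Matrix S S ℝ) : Matrix S S ℝ := Matrix.of fun i j => -(w i * A i j * w j)

theorem sq_dot (P T : Matrix S S ℝ) (hP : Pᵀ = -P) (hT : T.PosSemidef) (hTT : T * T = 1 + P * P)
    (y : S → ℝ) : T *ᵥ y ⬝ᵥ T *ᵥ y = y ⬝ᵥ y - P *ᵥ y ⬝ᵥ P *ᵥ y := by
  have hTs : Tᵀ = T := by
    have := hT.1
    rwa [Matrix.IsHermitian, conjTranspose_eq_transpose_of_trivial] at this
  have h1 : y ⬝ᵥ (P * P) *ᵥ y = - (P *ᵥ y ⬝ᵥ P *ᵥ y) := by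
    rw [← Matrix.mulVec_mulVec, Matrix.dotProduct_mulVec, ← Matrix.mulVec_transpose, hP,
      Matrix.neg_mulVec, neg_dotProduct]
  have h2 : y ⬝ᵥ (T * T) *ᵥ y = (T *ᵥ y ⬝ᵥ T *ᵥ y) := by
    rw [← Matrix.mulVec_mulVec, Matrix.dotProduct_mulVec, ← Matrix.mulVec_transpose, hTs]
  rw [← h2, hTT, add_mulVec, dotProduct_add, h1, one_mulVec]; ring

theorem blk_anti (A B C : Matrix S S ℝ) (hA : ∀ i j, A i j = - A j i) (hC : ∀ i j, C i j = - C j i)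
    (i j : S ⊕ S) : fromBlocks A B (-Bᵀ) C i j = - fromBlocks A B (-Bᵀ) C j i := by
  rcases i with i | i <;> rcases j with j | j <;> simp [← hA, ← hC]

theorem crossB_transpose (D w : S → ℝ) : (crossB D w)ᵀ = crossB D w := by
  simp [crossB]

theorem reflB_anti (w : S → ℝ) (A : Matrix S S ℝ) (hA : ∀ i j, A i j = - A j i) (i j : S) :
    reflB w A i j = - reflB w A j i := by
  simp only [reflB, of_apply]; rw [hA i j]; ring

theorem cross_sum (D w : S → ℝ) (hw : ∀ i, w i * w i = 1) (T : Matrix S S ℝ) :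
    ∑ i, ∑ j, crossB D w i j * (T i j * w j) = ∑ i, D i * T i i := by
  refine Finset.sum_congr rfl fun i _ => ?_
  rw [Finset.sum_eq_single i]
  · simp only [crossB, diagonal_apply_eq]
    linear_combination (D i * T i i) * hw i
  · intro j _ hj; simp [crossB, hj.symm]
  · simp

theorem leastEig_refl_left [Nontrivial V] (c : S ⊕ S → (V →ₗ[ℂ] V)) (hc : IsMajoranaFamily c)
    (A1 P T : Matrix S S ℝ) (hA1 : ∀ i j, A1 i j = - A1 j i) (hP : Pᵀ = -P)
    (hT : T.PosSemidef) (hTT : T * T = 1 + P * P) (hTP : T * P = P * T)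
    (D w : S → ℝ) (hw : ∀ i, w i * w i = 1) :
    leastEig (quadH (fromBlocks A1 (crossB D w) (-(crossB D w)) (reflB w A1)) c) ≤
      (∑ i, ∑ j, A1 i j * P i j) - ∑ i, D i * T i i := by
  set W : Matrix S S ℝ := diagonal w with hW
  have hWW : W * W = 1 := by
    rw [hW, diagonal_mul_diagonal]; simp [hw]
  have hTs : Tᵀ = T := by
    have := hT.1
    rwa [Matrix.IsHermitian, conjTranspose_eq_transpose_of_trivial] at this
  have hWt : Wᵀ = W := by simp [hW]
  have hPa : ∀ i j, P i j = - P j i := fun i j => congrFun (congrFun hP j) i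
  have hWWx : ∀ X : Matrix S S ℝ, W * (W * X) = X := by
    intro X; rw [← mul_assoc, hWW, one_mul]
  have hB : W * T = -(-(T * W))ᵀ := by
    rw [transpose_neg, transpose_mul, hTs, hWt, neg_neg]
  have hWP : ∀ i j, (-(W * P * W)) i j = -(w i * P i j * w j) := by
    intro i j; simp [hW]
  have h := leastEig_le c hc (fromBlocks A1 (crossB D w) (-(crossB D w)) (reflB w A1))
    (by
      intro i j
      have := blk_anti A1 (crossB D w) (reflB w A1) hA1 (reflB_anti w A1 hA1) i j
      rwa [crossB_transpose] at this)
    (fromBlocks P (-(T * W)) (W * T) (-(W * P * W)))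
    (by
      intro i j
      rw [hB]
      refine blk_anti _ _ _ hPa ?_ i j
      intro i j
      rw [hWP, hWP, hPa i j]; ring)
    (by
      have hTPx : ∀ X, T * (P * X) = P * (T * X) := by
        intro X; rw [← mul_assoc, hTP, mul_assoc]
      have hTTx : ∀ X, T * (T * X) = X + P * (P * X) := by
        intro X; rw [← mul_assoc, hTT, add_mul, one_mul, mul_assoc]
      rw [fromBlocks_multiply]
      simp only [mul_assoc, neg_mul, mul_neg, neg_neg, hWWx, hTT, hTP, hTPx, hTTx, mul_add, hWW]
      rw [← fromBlocks_one, fromBlocks_neg]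
      congr 1 <;> simp)
  refine h.trans (le_of_eq ?_)
  simp only [Fintype.sum_sum_type, fromBlocks_apply₁₁, fromBlocks_apply₁₂, fromBlocks_apply₂₁,
    fromBlocks_apply₂₂, Finset.sum_add_distrib, hWP]
  have e1 : ∑ i, ∑ j, crossB D w i j * (-(T * W)) i j = - ∑ i, D i * T i i := by
    rw [← cross_sum D w hw T, ← Finset.sum_neg_distrib]
    refine Finset.sum_congr rfl fun i _ => ?_
    rw [← Finset.sum_neg_distrib]
    refine Finset.sum_congr rfl fun j _ => ?_
    simp [hW]
  have e2 : ∑ i, ∑ j, (-(crossB D w)) i j * (W * T) i j = - ∑ i, D i * T i i := by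
    rw [← cross_sum D w hw T, ← Finset.sum_neg_distrib, Finset.sum_comm]
    refine Finset.sum_congr rfl fun i _ => ?_
    rw [← Finset.sum_neg_distrib]
    refine Finset.sum_congr rfl fun j _ => ?_
    have : T j i = T i j := congrFun (congrFun hTs i) j
    have h' : crossB D w j i = crossB D w i j := congrFun (congrFun (crossB_transpose D w) i) j
    rw [Matrix.neg_apply, h', hW, diagonal_mul, this]; ring
  have e3 : ∑ i, ∑ j, reflB w A1 i j * -(w i * P i j * w j) = ∑ i, ∑ j, A1 i j * P i j := by
    refine Finset.sum_congr rfl fun i _ => ?_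
    refine Finset.sum_congr rfl fun j _ => ?_
    simp only [reflB, of_apply]
    linear_combination (A1 i j * P i j) * (w j * w j * hw i + hw j)
  rw [e1, e2, e3]; ring

theorem quadH_swap (c : S ⊕ S → (V →ₗ[ℂ] V)) (A : Matrix (S ⊕ S) (S ⊕ S) ℝ) :
    quadH (A.submatrix Sum.swap Sum.swap) (c ∘ Sum.swap) = quadH A c := by
  unfold quadH
  simp only [Fintype.sum_sum_type, submatrix_apply, Sum.swap_inl, Sum.swap_inr, Function.comp]
  simp only [Finset.sum_add_distrib]
  congr 1
  abel

theorem majorana_comp {m n : Type*} (f : m → n) (hf : Function.Injective f)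
    (c : n → (V →ₗ[ℂ] V)) (hc : IsMajoranaFamily c) : IsMajoranaFamily (c ∘ f) := by
  refine ⟨fun i => hc.1 _, fun i j => ?_⟩
  simp only [Function.comp, hc.2, hf.eq_iff]

theorem reflection_ineq [Nontrivial V] (c : S ⊕ S → (V →ₗ[ℂ] V)) (hc : IsMajoranaFamily c)
    (A1 A2 : Matrix S S ℝ) (hA1 : ∀ i j, A1 i j = - A1 j i) (hA2 : ∀ i j, A2 i j = - A2 j i)
    (D w : S → ℝ) (hD : ∀ i, 0 ≤ D i) (hw : ∀ i, w i * w i = 1) :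
    leastEig (quadH (fromBlocks A1 (crossB D w) (-(crossB D w)) (reflB w A1)) c) +
    leastEig (quadH (fromBlocks (reflB w A2) (crossB D w) (-(crossB D w)) A2) c) ≤
    2 * leastEig (quadH (fromBlocks A1 (crossB D w) (-(crossB D w)) A2) c) := by
  have hAa : ∀ i j, fromBlocks A1 (crossB D w) (-(crossB D w)) A2 i j =
      - fromBlocks A1 (crossB D w) (-(crossB D w)) A2 j i := by
    intro i j
    have := blk_anti A1 (crossB D w) A2 hA1 hA2 i j
    rwa [crossB_transpose] at this
  obtain ⟨⟨ψ, hψ, hE⟩, -⟩ := leastEig_spec _ (quadH_symm c hc _ hAa)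
  have hE2 := quadH_energy c hc _ hAa ψ
  rw [hE, inner_smul_right, inner_self_eq_norm_sq_to_K, hψ] at hE2
  simp only [one_pow, mul_one, RCLike.ofReal_one, Complex.ofReal_re] at hE2
  set G := covar c ψ with hG
  have hGa : ∀ i j, G i j = - G j i := covar_antisymm c ψ
  set P := G.toBlocks₁₁ with hPd
  set Q := G.toBlocks₁₂ with hQd
  set R := G.toBlocks₂₂ with hRd
  have hGb : G = fromBlocks P Q (-Qᵀ) R := by
    conv_lhs => rw [← fromBlocks_toBlocks G]
    congr 1
    ext i j
    exact hGa _ _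
  have hP : Pᵀ = -P := by ext i j; exact hGa _ _
  have hR : Rᵀ = -R := by ext i j; exact hGa _ _
  have hc1 : ∀ y : S → ℝ, P *ᵥ y ⬝ᵥ P *ᵥ y + Qᵀ *ᵥ y ⬝ᵥ Qᵀ *ᵥ y ≤ y ⬝ᵥ y := by
    intro y
    have := covar_contr c hc ψ hψ (Sum.elim y 0)
    rw [← hG, hGb, fromBlocks_mulVec, sumElim_dotProduct_sumElim, sumElim_dotProduct_sumElim] at this
    simpa [neg_mulVec] using this
  have hc2 : ∀ y : S → ℝ, Q *ᵥ y ⬝ᵥ Q *ᵥ y + R *ᵥ y ⬝ᵥ R *ᵥ y ≤ y ⬝ᵥ y := by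
    intro y
    have := covar_contr c hc ψ hψ (Sum.elim 0 y)
    rw [← hG, hGb, fromBlocks_mulVec, sumElim_dotProduct_sumElim, sumElim_dotProduct_sumElim] at this
    simpa [neg_mulVec] using this
  have hnn : ∀ y : S → ℝ, 0 ≤ y ⬝ᵥ y := fun y => by
    simpa using dotProduct_star_self_nonneg y
  obtain ⟨T, hT, hTT, hTP⟩ := exists_sqrt P hP (fun y => by linarith [hc1 y, hnn (Qᵀ *ᵥ y)])
  obtain ⟨U, hU, hUU, hUR⟩ := exists_sqrt R hR (fun y => by linarith [hc2 y, hnn (Q *ᵥ y)])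
  have hoff := offdiag_bound Q T U hT hU
    (fun y => by rw [sq_dot P T hP hT hTT]; linarith [hc1 y])
    (fun y => by rw [sq_dot R U hR hU hUU]; linarith [hc2 y])
  have hL := leastEig_refl_left c hc A1 P T hA1 hP hT hTT hTP D w hw
  have hRR := leastEig_refl_left (c ∘ Sum.swap)
    (majorana_comp _ (Equiv.sumComm S S).injective c hc) A2 R U hA2 hR hU hUU hUR D
    (fun i => - w i) (by intro i; simpa using hw i)
  have hsw : quadH (fromBlocks A2 (crossB D fun i => -w i) (-(crossB D fun i => -w i))
      (reflB (fun i => -w i) A2)) (c ∘ Sum.swap) =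
      quadH (fromBlocks (reflB w A2) (crossB D w) (-(crossB D w)) A2) c := by
    rw [← quadH_swap c]
    congr 1
    ext i j
    have hn : crossB D (fun i => -w i) = - crossB D w := by
      ext i j
      by_cases h : i = j
      · subst h; simp [crossB]
      · simp [crossB, h]
    rcases i with i | i <;> rcases j with j | j <;> simp [hn, reflB]
  rw [hsw] at hRR
  have hEn : leastEig (quadH (fromBlocks A1 (crossB D w) (-(crossB D w)) A2) c) =
      2⁻¹ * ((∑ i, ∑ j, A1 i j * P i j) + (∑ i, ∑ j, A2 i j * R i j)
        + 2 * ∑ i, D i * (w i * Q i i)) := by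
    rw [hE2, hGb]
    simp only [Fintype.sum_sum_type, fromBlocks_apply₁₁, fromBlocks_apply₁₂, fromBlocks_apply₂₁,
      fromBlocks_apply₂₂, Finset.sum_add_distrib]
    have e1 : ∑ i, ∑ j, crossB D w i j * Q i j = ∑ i, D i * (w i * Q i i) := by
      refine Finset.sum_congr rfl fun i _ => ?_
      rw [Finset.sum_eq_single i]
      · simp [crossB, mul_assoc]
      · intro j _ hj; simp [crossB, hj.symm]
      · simp
    have e2 : ∑ i, ∑ j, (-(crossB D w)) i j * (-Qᵀ) i j = ∑ i, D i * (w i * Q i i) := by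
      refine Finset.sum_congr rfl fun i _ => ?_
      rw [Finset.sum_eq_single i]
      · simp [crossB, mul_assoc]
      · intro j _ hj; simp [crossB, hj.symm]
      · simp
    rw [e1, e2]; ring
  have hfin : - (∑ i, D i * T i i + ∑ i, D i * U i i) ≤ 2 * ∑ i, D i * (w i * Q i i) := by
    rw [← Finset.sum_add_distrib, Finset.mul_sum, ← Finset.sum_neg_distrib]
    refine Finset.sum_le_sum fun i _ => ?_
    have h1 := hoff i
    have h2 : -|Q i i| ≤ w i * Q i i := by
      have : |w i * Q i i| = |Q i i| := by
        rw [abs_mul]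
        have : |w i| = 1 := by
          have := hw i
          rcases mul_self_eq_one_iff.1 this with h | h <;> simp [h]
        rw [this, one_mul]
      rw [← this]; exact neg_abs_le _
    nlinarith [hD i, mul_le_mul_of_nonneg_left h1 (hD i), mul_le_mul_of_nonneg_left h2 (hD i)]
  linarith

end Abs

section Lattice

/-- Abstract properties of the lattice reflection. -/
structure ReflData {d : ℕ} (Λ : Finset (Fin d → ℤ)) (θ : (Fin d → ℤ) → (Fin d → ℤ))
    (left : (Fin d → ℤ) → Prop) : Prop where
  inv : ∀ x, θ (θ x) = x
  mem : ∀ x ∈ Λ, θ x ∈ Λ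
  nn : ∀ x y, IsNN (θ x) (θ y) ↔ IsNN x y
  side : ∀ x, left (θ x) ↔ ¬ left x
  cross : ∀ x y, IsNN x y → left x → ¬ left y → y = θ x

theorem IsNN.symm {d : ℕ} {i j : Fin d → ℤ} (h : IsNN i j) : IsNN j i := by
  unfold IsNN at *
  rw [← h]
  refine Finset.sum_congr rfl fun k _ => ?_
  omega

theorem isNN_comm {d : ℕ} (i j : Fin d → ℤ) : IsNN i j ↔ IsNN j i := ⟨IsNN.symm, IsNN.symm⟩

/-- Sign on the bond crossing at `i`. -/
def crossSign {d : ℕ} (θ : (Fin d → ℤ) → (Fin d → ℤ)) (left : (Fin d → ℤ) → Prop)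
    (u : (Fin d → ℤ) → (Fin d → ℤ) → ℤ) (i : Fin d → ℤ) : ℤ :=
  if IsNN i (θ i) then (if left i then u i (θ i) else u (θ i) i) else 1

/-- Reflected sign assignment keeping the side `side`. -/
def reflU {d : ℕ} (θ : (Fin d → ℤ) → (Fin d → ℤ)) (side : (Fin d → ℤ) → Prop)
    (w : (Fin d → ℤ) → ℤ) (u : (Fin d → ℤ) → (Fin d → ℤ) → ℤ) (i j : Fin d → ℤ) : ℤ :=
  if ¬ side i ∧ ¬ side j then -(w i * w j * u (θ i) (θ j)) else u i j

variable {d : ℕ} {Λ : Finset (Fin d → ℤ)} {θ : (Fin d → ℤ) → (Fin d → ℤ)}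
  {left : (Fin d → ℤ) → Prop}

theorem crossSign_theta (h : ReflData Λ θ left) (u : (Fin d → ℤ) → (Fin d → ℤ) → ℤ)
    (i : Fin d → ℤ) : crossSign θ left u (θ i) = crossSign θ left u i := by
  unfold crossSign
  rw [h.inv, isNN_comm (θ i) i]
  by_cases hl : left i
  · simp [h.side, hl]
  · simp [h.side, hl]

theorem crossSign_pm (h : ReflData Λ θ left) (u : (Fin d → ℤ) → (Fin d → ℤ) → ℤ)
    (hu : IsSignAssignment Λ u) (i : Fin d → ℤ) (hi : i ∈ Λ) :
    crossSign θ left u i = 1 ∨ crossSign θ left u i = -1 := by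
  unfold crossSign
  split_ifs with h1 h2
  · exact (hu i hi _ (h.mem _ hi) h1).1
  · exact (hu _ (h.mem _ hi) i hi h1.symm).1
  · exact Or.inl rfl

theorem reflU_sign (h : ReflData Λ θ left) (u : (Fin d → ℤ) → (Fin d → ℤ) → ℤ)
    (hu : IsSignAssignment Λ u) (side : (Fin d → ℤ) → Prop) :
    IsSignAssignment Λ (reflU θ side (crossSign θ left u) u) := by
  intro i hi j hj hij
  unfold reflU
  by_cases hs : ¬ side i ∧ ¬ side j
  · rw [if_pos hs, if_pos hs.symm]
    have h1 := hu _ (h.mem _ hi) _ (h.mem _ hj) ((h.nn i j).2 hij)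
    rw [h1.2]
    refine ⟨?_, by ring⟩
    have h1' := (hu _ (h.mem _ hj) _ (h.mem _ hi) ((h.nn j i).2 hij.symm)).1
    rcases crossSign_pm h u hu i hi with a | a <;> rcases crossSign_pm h u hu j hj with b | b <;>
      rcases h1' with e | e <;> simp [a, b, e]
  · rw [if_neg hs, if_neg (fun h' => hs h'.symm)]
    exact hu i hi j hj hij

variable {V : Type*} [NormedAddCommGroup V] [InnerProductSpace ℂ V] [FiniteDimensional ℂ V]

/-- Parametrization of the box by two copies of the left half. -/
def halves (Λ : Finset (Fin d → ℤ)) (θ : (Fin d → ℤ) → (Fin d → ℤ))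
    (left : (Fin d → ℤ) → Prop) (x : ↥(Λ.filter left) ⊕ ↥(Λ.filter left)) : Fin d → ℤ :=
  Sum.elim (fun s : ↥(Λ.filter left) => (s : Fin d → ℤ))
    (fun s : ↥(Λ.filter left) => θ (s : Fin d → ℤ)) x

/-- Coupling constants on the crossing bonds. -/
def crossD (Λ : Finset (Fin d → ℤ)) (θ : (Fin d → ℤ) → (Fin d → ℤ))
    (left : (Fin d → ℤ) → Prop) (J : (Fin d → ℤ) → (Fin d → ℤ) → ℝ) (s : ↥(Λ.filter left)) : ℝ :=
  if IsNN (s : Fin d → ℤ) (θ (s : Fin d → ℤ)) then J (s : Fin d → ℤ) (θ (s : Fin d → ℤ)) else 0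

/-- Signs on the crossing bonds. -/
def crossW (Λ : Finset (Fin d → ℤ)) (θ : (Fin d → ℤ) → (Fin d → ℤ))
    (left : (Fin d → ℤ) → Prop) (u : (Fin d → ℤ) → (Fin d → ℤ) → ℤ) (s : ↥(Λ.filter left)) : ℝ :=
  (crossSign θ left u (s : Fin d → ℤ) : ℝ)

/-- Coupling on a bond. -/
def bond (J : (Fin d → ℤ) → (Fin d → ℤ) → ℝ)
    (u : (Fin d → ℤ) → (Fin d → ℤ) → ℤ) (i j : Fin d → ℤ) : ℝ :=
  if IsNN i j then J i j * (u i j : ℝ) else 0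

/-- The coupling matrix. -/
def coup (Λ : Finset (Fin d → ℤ)) (θ : (Fin d → ℤ) → (Fin d → ℤ))
    (left : (Fin d → ℤ) → Prop) (J : (Fin d → ℤ) → (Fin d → ℤ) → ℝ)
    (u : (Fin d → ℤ) → (Fin d → ℤ) → ℤ) :
    Matrix (↥(Λ.filter left) ⊕ ↥(Λ.filter left)) (↥(Λ.filter left) ⊕ ↥(Λ.filter left)) ℝ :=
  fun x y => bond J u (halves Λ θ left x) (halves Λ θ left y)

theorem halves_mem (h : ReflData Λ θ left) (x) : halves Λ θ left x ∈ Λ := by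
  rcases x with ⟨s, hs⟩ | ⟨s, hs⟩
  · exact (Finset.mem_filter.1 hs).1
  · exact h.mem _ (Finset.mem_filter.1 hs).1

theorem halves_inj (h : ReflData Λ θ left) : Function.Injective (halves Λ θ left) := by
  rintro (⟨s, hs⟩ | ⟨s, hs⟩) (⟨t, ht⟩ | ⟨t, ht⟩) hst <;> simp only [halves, Sum.elim_inl, Sum.elim_inr] at hst
  · subst hst; rfl
  · exact absurd (Finset.mem_filter.1 hs).2 (by rw [hst, h.side]; simpa using (Finset.mem_filter.1 ht).2)
  · exact absurd (Finset.mem_filter.1 ht).2 (by rw [← hst, h.side]; simpa using (Finset.mem_filter.1 hs).2)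
  · have := congrArg θ hst
    rw [h.inv, h.inv] at this
    subst this; rfl

theorem halves_surj (h : ReflData Λ θ left) (i) (hi : i ∈ Λ) : ∃ x, halves Λ θ left x = i := by
  by_cases hl : left i
  · exact ⟨Sum.inl ⟨i, Finset.mem_filter.2 ⟨hi, hl⟩⟩, rfl⟩
  · exact ⟨Sum.inr ⟨θ i, Finset.mem_filter.2 ⟨h.mem _ hi, (h.side i).2 hl⟩⟩, h.inv i⟩

theorem sum_halves (h : ReflData Λ θ left) {M : Type*} [AddCommMonoid M] (f : (Fin d → ℤ) → M) :
    ∑ i ∈ Λ, f i = ∑ x, f (halves Λ θ left x) := by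
  symm
  refine Finset.sum_nbij (halves Λ θ left) (fun x _ => halves_mem h x)
    (fun x _ y _ hxy => halves_inj h hxy) ?_ (fun _ _ => rfl)
  intro i hi
  obtain ⟨x, hx⟩ := halves_surj h i hi
  exact ⟨x, by simp, hx⟩

theorem cubicH_eq_quadH (h : ReflData Λ θ left) (J : (Fin d → ℤ) → (Fin d → ℤ) → ℝ)
    (u : (Fin d → ℤ) → (Fin d → ℤ) → ℤ) (c : (Fin d → ℤ) → (V →ₗ[ℂ] V)) :
    cubicH Λ J u c = quadH (coup Λ θ left J u) (c ∘ halves Λ θ left) := by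
  unfold cubicH quadH
  rw [sum_halves h]
  congr 1
  refine Finset.sum_congr rfl fun x _ => ?_
  rw [sum_halves h]
  refine Finset.sum_congr rfl fun y _ => ?_
  unfold coup bond
  split_ifs <;> simp

theorem coup_blocks (h : ReflData Λ θ left) (J : (Fin d → ℤ) → (Fin d → ℤ) → ℝ)
    (hJsymm : ∀ i j, J i j = J j i)
    (u u' : (Fin d → ℤ) → (Fin d → ℤ) → ℤ) (hu : IsSignAssignment Λ u)
    (hcr : ∀ i j, ¬ (left i ↔ left j) → u' i j = u i j) :
    coup Λ θ left J u' = Matrix.fromBlocks (coup Λ θ left J u').toBlocks₁₁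
      (crossB (crossD Λ θ left J) (crossW Λ θ left u))
      (-(crossB (crossD Λ θ left J) (crossW Λ θ left u)))
      (coup Λ θ left J u').toBlocks₂₂ := by
  have hl : ∀ s : ↥(Λ.filter left), left s := fun s => (Finset.mem_filter.1 s.2).2
  have hm : ∀ s : ↥(Λ.filter left), (s : Fin d → ℤ) ∈ Λ := fun s => (Finset.mem_filter.1 s.2).1
  have hr : ∀ s : ↥(Λ.filter left), ¬ left (θ s) := fun s => by rw [h.side]; simpa using hl s
  have hcross : ∀ s t : ↥(Λ.filter left), IsNN (s : Fin d → ℤ) (θ t) → s = t := by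
    intro s t hst
    have := h.cross _ _ hst (hl s) (hr t)
    have := congrArg θ this
    rw [h.inv, h.inv] at this
    exact Subtype.ext this.symm
  conv_lhs => rw [← Matrix.fromBlocks_toBlocks (coup Λ θ left J u')]
  congr 1
  · ext s t
    simp only [Matrix.toBlocks₁₂, Matrix.of_apply, coup, halves, Sum.elim_inl, Sum.elim_inr]
    unfold bond
    by_cases hst : s = t
    · subst hst
      rw [hcr _ _ (by simp [hl, hr])]
      simp only [crossB, Matrix.diagonal_apply_eq, crossD, crossW, crossSign]
      split_ifs with h1 h2
      · rfl
      · exact absurd (hl s) h2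
      · simp
    · rw [if_neg (fun hh => hst (hcross _ _ hh))]
      simp [crossB, hst]
  · ext s t
    simp only [Matrix.toBlocks₂₁, Matrix.of_apply, coup, halves, Sum.elim_inl, Sum.elim_inr]
    unfold bond
    by_cases hst : s = t
    · subst hst
      rw [hcr _ _ (by simp [hl, hr])]
      simp only [crossB, Matrix.diagonal_apply_eq, crossD, crossW, crossSign, Matrix.neg_apply]
      rw [isNN_comm, hJsymm (θ s) s]
      split_ifs with h1 h2
      · rw [(hu _ (hm s) _ (h.mem _ (hm s)) h1).2]; push_cast; ring
      · exact absurd (hl s) h2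
      · simp
    · rw [if_neg (fun hh => hst (hcross _ _ hh.symm).symm)]
      simp [crossB, hst]

theorem reflU_cross (u : (Fin d → ℤ) → (Fin d → ℤ) → ℤ) (w : (Fin d → ℤ) → ℤ) (i j : Fin d → ℤ)
    (hij : ¬ (left i ↔ left j)) : reflU θ left w u i j = u i j := by
  unfold reflU
  rw [if_neg]; tauto

theorem reflU_cross' (u : (Fin d → ℤ) → (Fin d → ℤ) → ℤ) (w : (Fin d → ℤ) → ℤ) (i j : Fin d → ℤ)
    (hij : ¬ (left i ↔ left j)) : reflU θ (fun x => ¬ left x) w u i j = u i j := by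
  unfold reflU
  rw [if_neg]; tauto

set_option maxHeartbeats 400000 in
theorem lattice_ineq [Nontrivial V] (h : ReflData Λ θ left)
    (c : (Fin d → ℤ) → (V →ₗ[ℂ] V))
    (hc : IsMajoranaFamily fun i : Λ => c (i : Fin d → ℤ))
    (J : (Fin d → ℤ) → (Fin d → ℤ) → ℝ)
    (hJsymm : ∀ i j, J i j = J j i) (hJpos : ∀ i j, 0 ≤ J i j)
    (hJrefl : ∀ i ∈ Λ, ∀ j ∈ Λ, IsNN i j → J (θ i) (θ j) = J i j)
    (u : (Fin d → ℤ) → (Fin d → ℤ) → ℤ) (hu : IsSignAssignment Λ u) :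
    leastEig (cubicH Λ J (reflU θ left (crossSign θ left u) u) c) +
    leastEig (cubicH Λ J (reflU θ (fun x => ¬ left x) (crossSign θ left u) u) c) ≤
    2 * leastEig (cubicH Λ J u c) := by
  have hl : ∀ s : ↥(Λ.filter left), left s := fun s => (Finset.mem_filter.1 s.2).2
  have hm : ∀ s : ↥(Λ.filter left), (s : Fin d → ℤ) ∈ Λ := fun s => (Finset.mem_filter.1 s.2).1
  have hr : ∀ s : ↥(Λ.filter left), ¬ left (θ s) := fun s => by rw [h.side]; simpa using hl s
  set w := crossSign θ left u with hw
  have hc' : IsMajoranaFamily (c ∘ halves Λ θ left) := by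
    have hinj : Function.Injective (fun x => (⟨halves Λ θ left x, halves_mem h x⟩ : Λ)) :=
      fun x y hxy => halves_inj h (congrArg Subtype.val hxy)
    have := majorana_comp (V := V) _ hinj (fun i : Λ => c (i : Fin d → ℤ)) hc
    exact this
  have hanti : ∀ x y, coup Λ θ left J u x y = - coup Λ θ left J u y x := by
    intro x y
    unfold coup bond
    rw [isNN_comm (halves Λ θ left y), hJsymm (halves Λ θ left y)]
    split_ifs with h1
    · rw [(hu _ (halves_mem h x) _ (halves_mem h y) h1).2]; push_cast; ring
    · simp
  have key := reflection_ineq (c ∘ halves Λ θ left) hc' (coup Λ θ left J u).toBlocks₁₁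
    (coup Λ θ left J u).toBlocks₂₂ (fun i j => hanti _ _) (fun i j => hanti _ _)
    (crossD Λ θ left J) (crossW Λ θ left u)
    (fun s => by unfold crossD; split_ifs; exacts [hJpos _ _, le_rfl])
    (fun s => by
      rcases crossSign_pm h u hu s (hm s) with e | e <;> simp [crossW, e])
  rw [← coup_blocks h J hJsymm u u hu (fun _ _ _ => rfl)] at key
  have b1 := coup_blocks h J hJsymm u (reflU θ left w u) hu (fun i j hij => reflU_cross u w i j hij)
  have b2 := coup_blocks h J hJsymm u (reflU θ (fun x => ¬ left x) w u) hu
    (fun i j hij => reflU_cross' u w i j hij)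
  have e1 : (coup Λ θ left J (reflU θ left w u)).toBlocks₁₁ = (coup Λ θ left J u).toBlocks₁₁ := by
    ext s t
    simp only [Matrix.toBlocks₁₁, coup, halves, Matrix.of_apply, Sum.elim_inl]
    simp [bond, reflU, hl]
  have e2 : (coup Λ θ left J (reflU θ (fun x => ¬ left x) w u)).toBlocks₂₂ =
      (coup Λ θ left J u).toBlocks₂₂ := by
    ext s t
    simp only [Matrix.toBlocks₂₂, coup, halves, Matrix.of_apply, Sum.elim_inr]
    simp [bond, reflU, hr]
  have e3 : (coup Λ θ left J (reflU θ left w u)).toBlocks₂₂ =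
      reflB (crossW Λ θ left u) (coup Λ θ left J u).toBlocks₁₁ := by
    ext s t
    simp only [Matrix.toBlocks₂₂, Matrix.toBlocks₁₁, coup, halves, Matrix.of_apply,
      Sum.elim_inl, Sum.elim_inr]
    simp only [bond, reflU, hr, reflB, crossW, Matrix.of_apply, Sum.elim_inl, Sum.elim_inr,
      h.nn, h.inv, not_false_eq_true, and_self, if_true]
    rw [hw, crossSign_theta h, crossSign_theta h]
    split_ifs with h1
    · rw [hJrefl _ (hm s) _ (hm t) h1]; push_cast; ring
    · simp
  have e4 : (coup Λ θ left J (reflU θ (fun x => ¬ left x) w u)).toBlocks₁₁ =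
      reflB (crossW Λ θ left u) (coup Λ θ left J u).toBlocks₂₂ := by
    ext s t
    simp only [Matrix.toBlocks₂₂, Matrix.toBlocks₁₁, coup, halves, Matrix.of_apply,
      Sum.elim_inl, Sum.elim_inr]
    simp only [bond, reflU, hl, reflB, crossW, Matrix.of_apply, Sum.elim_inl, Sum.elim_inr,
      h.nn, not_true_eq_false, not_false_eq_true, and_self, if_true]
    split_ifs with h1
    · rw [hJrefl _ (hm s) _ (hm t) h1]; push_cast; ring
    · simp
  rw [e1, e3] at b1
  rw [e2, e4] at b2
  rw [← b1, ← b2] at key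
  rw [cubicH_eq_quadH h, cubicH_eq_quadH h, cubicH_eq_quadH h]
  exact key

/-- Existence of a minimizing sign assignment. -/
theorem exists_minimizer (Λ : Finset (Fin d → ℤ)) (J : (Fin d → ℤ) → (Fin d → ℤ) → ℝ)
    (c : (Fin d → ℤ) → (V →ₗ[ℂ] V)) :
    ∃ u, IsSignAssignment Λ u ∧ ∀ u', IsSignAssignment Λ u' →
      leastEig (cubicH Λ J u c) ≤ leastEig (cubicH Λ J u' c) := by
  let F : (Λ → Λ → Bool) → ℝ := fun b => leastEig (cubicH Λ J
    (fun i j => if h : i ∈ Λ ∧ j ∈ Λ then (if b ⟨i, h.1⟩ ⟨j, h.2⟩ then 1 else -1) else 0) c)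
  let X : Set ℝ := {t | ∃ u, IsSignAssignment Λ u ∧ leastEig (cubicH Λ J u c) = t}
  have hfin : X.Finite := by
    refine (Set.finite_range F).subset ?_
    rintro _ ⟨u, hu, rfl⟩
    refine ⟨fun i j => decide (u i j = 1), ?_⟩
    simp only [F]
    congr 1
    unfold cubicH
    congr 1
    refine Finset.sum_congr rfl fun i hi => Finset.sum_congr rfl fun j hj => ?_
    split_ifs with h1
    · congr 5
      rcases (hu i hi j hj h1).1 with e | e <;> simp [e, hi, hj]
    · rfl
  have hne : X.Nonempty := by
    refine ⟨_, (fun i j => if ∑ k, i k < ∑ k, j k then 1 else -1), ?_, rfl⟩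
    intro i _ j _ hij
    have hne : ∑ k, i k ≠ ∑ k, j k := by
      intro he
      have h0 : ∑ k, (i k - j k) = 0 := by rw [Finset.sum_sub_distrib, he, sub_self]
      unfold IsNN at hij
      have h1 : (∑ k, ((i k - j k).natAbs : ℤ)) = 1 := by exact_mod_cast hij
      have h2 : (2 : ℤ) ∣ ∑ k, (((i k - j k).natAbs : ℤ) - (i k - j k)) :=
        Finset.dvd_sum fun k _ => by omega
      rw [Finset.sum_sub_distrib, h0, h1] at h2
      omega
    rcases lt_or_gt_of_ne hne with hlt | hlt
    · have h3 := hlt.not_gt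
      beta_reduce
      rw [if_pos hlt, if_neg h3]
      simp
    · have h3 := hlt.not_gt
      beta_reduce
      rw [if_pos hlt, if_neg h3]
      simp
  obtain ⟨t, ⟨u, hu, rfl⟩, hmin⟩ := Set.exists_min_image X id hfin hne
  exact ⟨u, hu, fun u' hu' => hmin _ ⟨u', hu', rfl⟩⟩

theorem reflData_box (lo hi : Fin d → ℤ) (a : Fin d) (hodd : Odd (lo a + hi a)) :
    ReflData (Finset.Icc lo hi) (fun x => Function.update x a (lo a + hi a - x a))
      (fun x => 2 * x a < lo a + hi a) where
  inv x := by simp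
  mem x hx := by
    rw [Finset.mem_Icc, Pi.le_def, Pi.le_def] at *
    constructor <;> intro k
    · have := hx.2 a
      by_cases hk : k = a
      · subst hk; simp; omega
      · simpa [hk] using hx.1 k
    · have := hx.1 a
      by_cases hk : k = a
      · subst hk; simp; omega
      · simpa [hk] using hx.2 k
  nn x y := by
    unfold IsNN
    have : ∀ k, (Function.update x a (lo a + hi a - x a) k -
        Function.update y a (lo a + hi a - y a) k).natAbs = (x k - y k).natAbs := by
      intro k
      by_cases hk : k = a
      · subst hk; simp; omega
      · simp [hk]
    simp only [this]
  side x := by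
    obtain ⟨m, hm⟩ := hodd
    simp only [Function.update_self]
    omega
  cross x y hxy hx hy := by
    unfold IsNN at hxy
    rw [← Finset.add_sum_erase _ _ (Finset.mem_univ a)] at hxy
    obtain ⟨m, hm⟩ := hodd
    have h1 : (x a - y a).natAbs = 1 := by omega
    have h2 : ∑ k ∈ Finset.univ.erase a, (x k - y k).natAbs = 0 := by omega
    rw [Finset.sum_eq_zero_iff] at h2
    ext k
    by_cases hk : k = a
    · subst hk; simp; omega
    · have := h2 k (by simp [hk])
      simp [hk]; omega

theorem loop_product (h : ReflData Λ θ left)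
    (u : (Fin d → ℤ) → (Fin d → ℤ) → ℤ) (hu : IsSignAssignment Λ u)
    (L : ℕ) (hL : 1 ≤ L) (v : ℕ → Fin d → ℤ)
    (hvΛ : ∀ k < 2 * L, v k ∈ Λ)
    (hvdist : ∀ k < 2 * L, ∀ k' < 2 * L, v k = v k' → k = k')
    (hvNN : ∀ k < 2 * L, IsNN (v k) (v ((k + 1) % (2 * L))))
    (hvrefl : ∀ k < 2 * L, θ (v k) = v (2 * L - 1 - k)) :
    ∏ k ∈ Finset.range (2 * L), reflU θ left (crossSign θ left u) u (v k) (v ((k + 1) % (2 * L)))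
      = -1 := by
  obtain ⟨N, rfl⟩ : ∃ N, L = N + 1 := ⟨L - 1, by omega⟩
  set w := crossSign θ left u with hw
  set u0 := reflU θ left w u with hu0
  have hu0s : IsSignAssignment Λ u0 := reflU_sign h u hu left
  have hwsq : ∀ i ∈ Λ, w i * w i = 1 := by
    intro i hi
    rcases crossSign_pm h u hu i hi with e | e <;> rw [← hw] at e <;> simp [e]
  have hNN : ∀ k < N, IsNN (v k) (v (k + 1)) := by
    intro k hk
    have := hvNN k (by omega)
    rwa [Nat.mod_eq_of_lt (by omega)] at this
  have hside : ∀ k < N, (left (v k) ↔ left (v (k + 1))) := by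
    intro k hk
    by_contra hcon
    have : v (k + 1) = θ (v k) := by
      by_cases hl : left (v k)
      · exact h.cross _ _ (hNN k hk) hl (by tauto)
      · have := h.cross _ _ (hNN k hk).symm (by tauto) hl
        rw [this, h.inv]
    rw [hvrefl k (by omega)] at this
    have := hvdist _ (by omega) _ (by omega) this
    omega
  have hsame : ∀ i j, i ∈ Λ → j ∈ Λ → (left i ↔ left j) →
      u0 (θ i) (θ j) = -(w i * w j * u0 i j) := by
    intro i j hi hj hij
    simp only [hu0, reflU, h.side, h.inv]
    rw [hw, crossSign_theta h, crossSign_theta h, ← hw]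
    by_cases hl : left i
    · have hlj := hij.1 hl
      simp [hl, hlj]
    · have hlj : ¬ left j := fun h' => hl (hij.2 h')
      simp only [hl, hlj, not_false_eq_true, and_self, if_true, not_true_eq_false, if_false]
      linear_combination (- u (θ i) (θ j)) * (w j * w j * hwsq i hi + hwsq j hj)
  have hpair : ∀ k < N, u0 (v k) (v (k + 1)) * u0 (v (2 * N - k)) (v (2 * N + 1 - k)) =
      w (v k) * w (v (k + 1)) := by
    intro k hk
    have m1 := hvΛ k (by omega)
    have m2 := hvΛ (k + 1) (by omega)
    have e1 : v (2 * N - k) = θ (v (k + 1)) := by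
      rw [hvrefl (k + 1) (by omega)]; congr 1; omega
    have e2 : v (2 * N + 1 - k) = θ (v k) := by
      rw [hvrefl k (by omega)]; congr 1
    rw [e1, e2, hsame _ _ m2 m1 (hside k hk).symm]
    have hs := hu0s _ m1 _ m2 (hNN k hk)
    have hsq : u0 (v k) (v (k + 1)) * u0 (v k) (v (k + 1)) = 1 := by
      rcases hs.1 with e | e <;> simp [e]
    have : u0 (v (k + 1)) (v k) = - u0 (v k) (v (k + 1)) := by rw [hs.2, neg_neg]
    rw [this]
    linear_combination (w (v k) * w (v (k + 1))) * hsq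
  have htel : ∀ m ≤ N, ∏ k ∈ Finset.range m,
      (u0 (v k) (v (k + 1)) * u0 (v (2 * N - k)) (v (2 * N + 1 - k))) = w (v 0) * w (v m) := by
    intro m
    induction m with
    | zero => intro _; simp [hwsq (v 0) (hvΛ 0 (by omega))]
    | succ m ih =>
      intro hm
      rw [Finset.prod_range_succ, ih (by omega), hpair m (by omega)]
      linear_combination (w (v 0) * w (v (m + 1))) * hwsq (v m) (hvΛ m (by omega))
  have hcr : ∀ i ∈ Λ, IsNN i (θ i) → u0 i (θ i) = if left i then w i else - w i := by
    intro i hi hn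
    rw [hu0, reflU_cross u w i (θ i) (by rw [h.side]; tauto)]
    simp only [hw, crossSign, hn, if_true]
    split_ifs with hl
    · rfl
    · exact (hu _ hi _ (h.mem _ hi) hn).2
  have hleft : ∀ m ≤ N, (left (v m) ↔ left (v 0)) := by
    intro m
    induction m with
    | zero => intro _; rfl
    | succ m ih => intro hm; rw [← hside m (by omega), ih (by omega)]
  have split : ∏ k ∈ Finset.range (2 * (N + 1)), u0 (v k) (v ((k + 1) % (2 * (N + 1)))) =
      (∏ k ∈ Finset.range N, (u0 (v k) (v (k + 1)) * u0 (v (2 * N - k)) (v (2 * N + 1 - k))))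
        * (u0 (v N) (v (N + 1)) * u0 (v (2 * N + 1)) (v 0)) := by
    rw [show 2 * (N + 1) = (N + 1 + N) + 1 by ring, Finset.prod_range_succ, Finset.prod_range_add,
      Finset.prod_range_succ, Finset.prod_mul_distrib]
    have f1 : ∏ k ∈ Finset.range N, u0 (v k) (v ((k + 1) % (N + 1 + N + 1))) =
        ∏ k ∈ Finset.range N, u0 (v k) (v (k + 1)) := by
      refine Finset.prod_congr rfl fun k hk => ?_
      have := Finset.mem_range.1 hk
      rw [Nat.mod_eq_of_lt (by omega)]
    have f2 : ∏ k ∈ Finset.range N, u0 (v (N + 1 + k)) (v ((N + 1 + k + 1) % (N + 1 + N + 1))) =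
        ∏ k ∈ Finset.range N, u0 (v (2 * N - k)) (v (2 * N + 1 - k)) := by
      rw [← Finset.prod_range_reflect]
      refine Finset.prod_congr rfl fun k hk => ?_
      have := Finset.mem_range.1 hk
      rw [Nat.mod_eq_of_lt (by omega)]
      congr 2 <;> omega
    rw [f1, f2, Nat.mod_eq_of_lt (by omega : N + 1 < N + 1 + N + 1), Nat.mod_self,
      show N + 1 + N = 2 * N + 1 by ring]
    ring
  rw [split, htel N le_rfl]
  have m0 := hvΛ 0 (by omega)
  have mN := hvΛ N (by omega)
  have t0 : v (2 * N + 1) = θ (v 0) := by rw [hvrefl 0 (by omega)]; congr 1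
  have tN : v (N + 1) = θ (v N) := by rw [hvrefl N (by omega)]; congr 1; omega
  have nN : IsNN (v N) (θ (v N)) := by
    have := hvNN N (by omega)
    rwa [Nat.mod_eq_of_lt (by omega), tN] at this
  have n0 : IsNN (θ (v 0)) (v 0) := by
    have := hvNN (2 * N + 1) (by omega)
    rwa [show 2 * N + 1 + 1 = 2 * (N + 1) by ring, Nat.mod_self, t0] at this
  rw [t0, tN, hcr _ mN nN, (hu0s _ (h.mem _ m0) _ m0 n0).2, hcr _ m0 n0.symm]
  have := hwsq _ m0
  have := hwsq _ mN
  by_cases hl : left (v 0)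
  · rw [if_pos hl, if_pos ((hleft N le_rfl).2 hl)]
    linear_combination (- (w (v N) * w (v N))) * hwsq _ m0 - hwsq _ mN
  · rw [if_neg hl, if_neg (fun h' => hl ((hleft N le_rfl).1 h'))]
    linear_combination (- (w (v N) * w (v N))) * hwsq _ m0 - hwsq _ mN

end Lattice

/-- Let `Λ = [lo, hi] ⊂ ℤ^d` be a rectangular box with an even number
of sites, invariant under the reflection `θ` in the hyperplane perpendicular to the
coordinate axis `a` at the half-integer position `(lo a + hi a)/2` (so `θ` fixes no
site), and let `(c_i)_{i∈Λ}` be a Majorana family indexed by `Λ`. Assume the symmetric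
nonnegative couplings satisfy `J_{(θi, θj)} = J_{(ij)}` for every bond. Let
`C = (v 0, …, v (2L-1))` be a non-degenerate loop satisfying `θ (v k) = v (2L-1-k)`
for all `k`. Then the minimum over all antisymmetric sign assignments `u` of the least
eigenvalue of `H̃_u` is attained at some sign assignment `u₀` for which the loop `C` is
vortex-free: `-∏_{(ij)∈C} u₀_{ij} = 1`. -/
theorem vortex_free_minimizer_cubic_lattice
    {V : Type*} [NormedAddCommGroup V] [InnerProductSpace ℂ V]
    [FiniteDimensional ℂ V] [Nontrivial V]
    {d : ℕ} (lo hi : Fin d → ℤ) (hlohi : lo ≤ hi) (a : Fin d)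
    (Λ : Finset (Fin d → ℤ)) (hΛ : Λ = Finset.Icc lo hi) (hcard : Even Λ.card)
    (θ : (Fin d → ℤ) → (Fin d → ℤ))
    (hθ : θ = fun x => Function.update x a (lo a + hi a - x a))
    (hodd : Odd (lo a + hi a))
    (c : (Fin d → ℤ) → (V →ₗ[ℂ] V))
    (hc : IsMajoranaFamily fun i : Λ => c (i : Fin d → ℤ))
    (J : (Fin d → ℤ) → (Fin d → ℤ) → ℝ)
    (hJsymm : ∀ i j, J i j = J j i) (hJpos : ∀ i j, 0 ≤ J i j)
    (hJrefl : ∀ i ∈ Λ, ∀ j ∈ Λ, IsNN i j → J (θ i) (θ j) = J i j)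
    (L : ℕ) (hL : 1 ≤ L) (v : ℕ → Fin d → ℤ)
    (hvΛ : ∀ k < 2 * L, v k ∈ Λ)
    (hvdist : ∀ k < 2 * L, ∀ k' < 2 * L, v k = v k' → k = k')
    (hvNN : ∀ k < 2 * L, IsNN (v k) (v ((k + 1) % (2 * L))))
    (hvnondeg : ∀ k < 2 * L, J (v k) (v ((k + 1) % (2 * L))) ≠ 0)
    (hvrefl : ∀ k < 2 * L, θ (v k) = v (2 * L - 1 - k)) :
    ∃ u₀, IsSignAssignment Λ u₀ ∧
      (∀ u, IsSignAssignment Λ u →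
        leastEig (cubicH Λ J u₀ c) ≤ leastEig (cubicH Λ J u c)) ∧
      -∏ k ∈ Finset.range (2 * L), u₀ (v k) (v ((k + 1) % (2 * L))) = 1 := by
  have h : ReflData Λ θ (fun x => 2 * x a < lo a + hi a) := by
    subst hΛ hθ
    exact reflData_box lo hi a hodd
  obtain ⟨u, hu, hmin⟩ := exists_minimizer Λ J c
  refine ⟨reflU θ (fun x => 2 * x a < lo a + hi a)
    (crossSign θ (fun x => 2 * x a < lo a + hi a) u) u,
    reflU_sign h u hu (fun x => 2 * x a < lo a + hi a), ?_, ?_⟩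
  · intro u' hu'
    have h1 := lattice_ineq h c hc J hJsymm hJpos hJrefl u hu
    have h2 := hmin _ (reflU_sign h u hu (fun x => ¬ (2 * x a < lo a + hi a)))
    have h3 := hmin u' hu'
    linarith
  · rw [loop_product h u hu L hL v hvΛ hvdist hvNN hvrefl]
    norm_num
end
end

section
/- For the open or closed ladder of length N with real couplings J_{(ij)} and a Majorana family (b_k^x, b_k^y, b_k^z, c_k) indexed by the vertices, the operators γ_k^5 = b_k^x b_k^y b_k^z c_k (k = 1,…,4N) are self-adjoint, satisfy (γ_k^5)² = I, mutually commute, commute with every operator σ̃_m^α = i b_m^α c_m (m = 1,…,4N, α ∈ {x,y,z}), and commute with the fermionic ladder Hamiltonian H̃. -/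
noncomputable section
open scoped Classical

/-- The three bond types of the ladder. -/
inductive BondType : Type
  | x | y | z
  deriving DecidableEq

/-- Bonds of the open ladder of length `N`, with vertices `0, …, 4N-1` (these are the
1-based labels `1, …, 4N` of the paper shifted by one): type-z bonds `(2j, 2j+1)` for
`j = 0, …, 2N-1`; type-x bonds `(2j+1, 2j+2)` and type-y bonds `(2j, 2j+3)` for
`j = 0, …, 2N-2`. -/
def openBonds (N : ℕ) : List (ℕ × ℕ × BondType) :=
  ((List.range (2 * N)).map fun j => (2 * j, 2 * j + 1, BondType.z)) ++
    ((List.range (2 * N - 1)).map fun j => (2 * j + 1, 2 * j + 2, BondType.x)) ++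
    ((List.range (2 * N - 1)).map fun j => (2 * j, 2 * j + 3, BondType.y))

/-- Bonds of the closed ladder: the open ladder together with the closing
type-x bond `(4N-1, 0)` and the closing type-y bond `(4N-2, 1)`. -/
def closedBonds (N : ℕ) : List (ℕ × ℕ × BondType) :=
  openBonds N ++ [(4 * N - 1, 0, BondType.x), (4 * N - 2, 1, BondType.y)]

/-- The `16N` Majorana generators `b_k^α` and `c_k` of the fermionic ladder, indexed by
a vertex `k` together with `some α` (giving `b_k^α`) or `none` (giving `c_k`). -/
def ladderGen {A : Type*} (b : ℕ → BondType → A) (c : ℕ → A) :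
    ℕ × Option BondType → A
  | (k, none) => c k
  | (k, some α) => b k α

/-- The `16N` operators `b_k^α, c_k` (`k < 4N`) form a Majorana family. -/
def IsLadderMajorana {V : Type*} [NormedAddCommGroup V] [InnerProductSpace ℂ V]
    [FiniteDimensional ℂ V] (N : ℕ) (b : ℕ → BondType → (V →ₗ[ℂ] V))
    (c : ℕ → (V →ₗ[ℂ] V)) : Prop :=
  IsMajoranaFamily fun p : Fin (4 * N) × Option BondType => ladderGen b c ((p.1 : ℕ), p.2)

section LadderOps

variable {A : Type*} [Ring A] [Algebra ℂ A]

/-- The bond operator `u_{ij} = i b_i^t b_j^t` of the bond `e = (i, j, t)`. -/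
def uOp (b : ℕ → BondType → A) (e : ℕ × ℕ × BondType) : A :=
  Complex.I • (b e.1 e.2.2 * b e.2.1 e.2.2)

/-- The spin representative `σ̃_m^α = i b_m^α c_m`. -/
def sigmaOp (b : ℕ → BondType → A) (c : ℕ → A) (m : ℕ) (α : BondType) : A :=
  Complex.I • (b m α * c m)

/-- `γ_k^5 = b_k^x b_k^y b_k^z c_k`. -/
def gamma5 (b : ℕ → BondType → A) (c : ℕ → A) (k : ℕ) : A :=
  b k BondType.x * b k BondType.y * b k BondType.z * c k

/-- The term `⟨ij⟩ = J_{(ij)} u_{ij} i c_i c_j` of the fermionic ladder Hamiltonian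
on the bond `e = (i, j, t)`. -/
def bondTerm (J : ℕ × ℕ → ℝ) (b : ℕ → BondType → A) (c : ℕ → A)
    (e : ℕ × ℕ × BondType) : A :=
  (J (e.1, e.2.1) : ℂ) • (uOp b e * (Complex.I • (c e.1 * c e.2.1)))

/-- The fermionic ladder Hamiltonian `H̃ = Σ_{(ij)} J_{(ij)} u_{ij} i c_i c_j`,
each bond counted once. -/
def fermH (J : ℕ × ℕ → ℝ) (b : ℕ → BondType → A) (c : ℕ → A)
    (bonds : List (ℕ × ℕ × BondType)) : A :=
  (bonds.map (bondTerm J b c)).sum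

end LadderOps

/-- A (cyclic) loop: a length `len`, the vertex `v k` at cyclic position `k < len`, and
the type `t k` of the bond joining `v k` to `v ((k+1) % len)`. -/
structure Loop where
  len : ℕ
  v : ℕ → ℕ
  t : ℕ → BondType

/-- `L` is a loop of the lattice with bond list `bonds`: its vertices are distinct and
consecutive vertices are joined by a bond of `bonds` (traversed in either direction)
of the indicated type. -/
def Loop.IsLoopOf (L : Loop) (bonds : List (ℕ × ℕ × BondType)) : Prop :=
  3 ≤ L.len ∧
    (∀ k < L.len, ∀ k' < L.len, L.v k = L.v k' → k = k') ∧
    ∀ k < L.len,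
      (L.v k, L.v ((k + 1) % L.len), L.t k) ∈ bonds ∨
        (L.v ((k + 1) % L.len), L.v k, L.t k) ∈ bonds

/-- The fermionic vortex operator `B̃(C) = -u_{i₁i₂} u_{i₂i₃} ⋯ u_{i_ℓ i₁}` of a loop
(an ordered product around the loop). -/
def vortexOp {A : Type*} [Ring A] [Algebra ℂ A] (b : ℕ → BondType → A) (L : Loop) : A :=
  -((List.range L.len).map fun k => uOp b (L.v k, L.v ((k + 1) % L.len), L.t k)).prod

/-- `g` commutes with `a` up to the scalar `e`. -/
def ScalarComm {A : Type*} [Ring A] [Algebra ℂ A] (g a : A) (e : ℂ) : Prop :=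
  g * a = e • (a * g)

section Helpers

variable {A : Type*} [Ring A] [Algebra ℂ A]

theorem ScalarComm.mul {g a a' : A} {e e' : ℂ} (h : ScalarComm g a e)
    (h' : ScalarComm g a' e') : ScalarComm g (a * a') (e * e') := by
  unfold ScalarComm at *
  rw [← mul_assoc, h, smul_mul_assoc, mul_assoc, h', mul_smul_comm, smul_smul, mul_assoc]

theorem ScalarComm.mul_left {g g' a : A} {e e' : ℂ} (h : ScalarComm g a e)
    (h' : ScalarComm g' a e') : ScalarComm (g * g') a (e * e') := by
  unfold ScalarComm at *
  rw [mul_assoc, h', mul_smul_comm, ← mul_assoc, h, smul_mul_assoc, smul_smul, mul_assoc,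
    mul_comm e']

theorem ScalarComm.smul {g a : A} {e : ℂ} (h : ScalarComm g a e) (z : ℂ) :
    ScalarComm g (z • a) e := by
  unfold ScalarComm at *
  rw [mul_smul_comm, h, smul_mul_assoc, smul_comm]

theorem ScalarComm.commute {g a : A} {e : ℂ} (h : ScalarComm g a e) (he : e = 1) :
    Commute g a := by
  unfold ScalarComm at h
  rw [he, one_smul] at h
  exact h

theorem reverse_four {p q r s : A} (hqp : q * p = -(p * q)) (hrp : r * p = -(p * r))
    (hsp : s * p = -(p * s)) (hrq : r * q = -(q * r)) (hsq : s * q = -(q * s))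
    (hsr : s * r = -(r * s)) : s * (r * (q * p)) = p * q * r * s := by
  have hp : s * (r * (q * p)) = -(p * (s * (r * q))) := by
    rw [hqp, mul_neg, ← mul_assoc r, hrp, neg_mul, neg_neg, mul_assoc, ← mul_assoc s, hsp,
      neg_mul, mul_assoc]
  have hq : s * (r * q) = q * (s * r) := by
    rw [hrq, mul_neg, ← mul_assoc s, hsq, neg_mul, neg_neg, mul_assoc]
  rw [hp, hq, hsr, mul_neg, mul_neg, neg_neg]
  simp only [mul_assoc]

end Helpers

/-- For the open or closed ladder of length `N` with real couplings
`J_{(ij)}` and a Majorana family `(b_k^x, b_k^y, b_k^z, c_k)` indexed by the vertices,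
the operators `γ_k^5 = b_k^x b_k^y b_k^z c_k` are self-adjoint, square to `I`, mutually
commute, commute with every `σ̃_m^α = i b_m^α c_m`, and commute with the fermionic
ladder Hamiltonian `H̃`. -/
theorem gamma5_properties
    {V : Type*} [NormedAddCommGroup V] [InnerProductSpace ℂ V]
    [FiniteDimensional ℂ V] [Nontrivial V]
    (N : ℕ) (hN : 2 ≤ N)
    (bonds : List (ℕ × ℕ × BondType))
    (hbonds : bonds = openBonds N ∨ bonds = closedBonds N)
    (J : ℕ × ℕ → ℝ)
    (b : ℕ → BondType → (V →ₗ[ℂ] V)) (c : ℕ → (V →ₗ[ℂ] V))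
    (hbc : IsLadderMajorana N b c) :
    ∀ k < 4 * N,
      IsSelfAdjoint (gamma5 b c k) ∧
      gamma5 b c k * gamma5 b c k = 1 ∧
      (∀ l < 4 * N, Commute (gamma5 b c k) (gamma5 b c l)) ∧
      (∀ m < 4 * N, ∀ α : BondType, Commute (gamma5 b c k) (sigmaOp b c m α)) ∧
      Commute (gamma5 b c k) (fermH J b c bonds) := by
  obtain ⟨hsa, hcl⟩ := hbc
  have hS : ∀ k < 4 * N, ∀ o, IsSelfAdjoint (ladderGen b c (k, o)) :=
    fun k hk o => hsa (⟨k, hk⟩, o)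
  have hsq : ∀ k < 4 * N, ∀ o, ladderGen b c (k, o) * ladderGen b c (k, o) = 1 := by
    intro k hk o
    have h := hcl (⟨k, hk⟩, o) (⟨k, hk⟩, o)
    simp only [if_true] at h
    rw [← two_smul ℂ] at h
    exact smul_right_injective _ (two_ne_zero (α := ℂ)) h
  have hanti : ∀ k < 4 * N, ∀ l < 4 * N, ∀ o o', (k, o) ≠ (l, o') →
      ladderGen b c (k, o) * ladderGen b c (l, o') =
        -(ladderGen b c (l, o') * ladderGen b c (k, o)) := by
    intro k hk l hl o o' hne
    have h := hcl (⟨k, hk⟩, o) (⟨l, hl⟩, o')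
    rw [if_neg (by simpa using hne)] at h
    exact eq_neg_of_add_eq_zero_left h
  have hsc : ∀ k < 4 * N, ∀ l < 4 * N, ∀ o o',
      ScalarComm (ladderGen b c (k, o)) (ladderGen b c (l, o'))
        (if (k, o) = (l, o') then 1 else -1) := by
    intro k hk l hl o o'
    unfold ScalarComm
    split_ifs with h
    · rw [h, one_smul]
    · rw [hanti k hk l hl o o' h, neg_smul, one_smul]
  intro k hk
  have hg : ∀ m < 4 * N, ∀ o, ScalarComm (gamma5 b c k) (ladderGen b c (m, o))
      (if k = m then -1 else 1) := by
    intro m hm o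
    have h := (((hsc k hk m hm (some .x) o).mul_left (hsc k hk m hm (some .y) o)).mul_left
      (hsc k hk m hm (some .z) o)).mul_left (hsc k hk m hm none o)
    convert h using 1
    · rfl
    by_cases hkm : k = m
    · rcases o with _ | (_ | _ | _) <;> simp [hkm]
    · simp [hkm]
  have hgb : ∀ m < 4 * N, ∀ α, ScalarComm (gamma5 b c k) (b m α)
      (if k = m then -1 else 1) := fun m hm α => hg m hm (some α)
  have hgc : ∀ m < 4 * N, ScalarComm (gamma5 b c k) (c m)
      (if k = m then -1 else 1) := fun m hm => hg m hm none
  have hA : ∀ o o', o ≠ o' → ladderGen b c (k, o) * ladderGen b c (k, o') =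
        -(ladderGen b c (k, o') * ladderGen b c (k, o)) :=
    fun o o' h => hanti k hk k hk o o' (by simpa using h)
  have hrev : c k * (b k .z * (b k .y * b k .x)) = gamma5 b c k :=
    reverse_four (hA (some .y) (some .x) (by simp)) (hA (some .z) (some .x) (by simp))
      (hA none (some .x) (by simp)) (hA (some .z) (some .y) (by simp))
      (hA none (some .y) (by simp)) (hA none (some .z) (by simp))
  refine ⟨?_, ?_, ?_, ?_, ?_⟩
  · have hx : star (b k .x) = b k .x := hS k hk (some .x)
    have hy : star (b k .y) = b k .y := hS k hk (some .y)
    have hz : star (b k .z) = b k .z := hS k hk (some .z)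
    have hc : star (c k) = c k := hS k hk none
    rw [isSelfAdjoint_iff]
    conv_rhs => rw [← hrev]
    simp only [gamma5, star_mul, hx, hy, hz, hc]
  · have hx : b k .x * b k .x = 1 := hsq k hk (some .x)
    have hy : b k .y * b k .y = 1 := hsq k hk (some .y)
    have hz : b k .z * b k .z = 1 := hsq k hk (some .z)
    have hc : c k * c k = 1 := hsq k hk none
    calc gamma5 b c k * gamma5 b c k
        = gamma5 b c k * (c k * (b k .z * (b k .y * b k .x))) := by rw [hrev]
      _ = b k .x * (b k .y * (b k .z * (c k * c k) * b k .z) * b k .y) * b k .x := by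
          simp only [gamma5, mul_assoc]
      _ = 1 := by simp only [hc, mul_one, hz, hy, hx]
  · intro l hl
    refine ((((hgb l hl .x).mul (hgb l hl .y)).mul (hgb l hl .z)).mul (hgc l hl)).commute ?_
    split_ifs <;> norm_num
  · intro m hm α
    refine (((hgb m hm α).mul (hgc m hm)).smul Complex.I).commute ?_
    split_ifs <;> norm_num
  · have hmem : ∀ e ∈ bonds, e.1 < 4 * N ∧ e.2.1 < 4 * N := by
      have ho : ∀ e ∈ openBonds N, e.1 < 4 * N ∧ e.2.1 < 4 * N := by
        intro e he
        simp only [openBonds, List.mem_append, List.mem_map, List.mem_range] at he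
        rcases he with (⟨j, hj, rfl⟩ | ⟨j, hj, rfl⟩) | ⟨j, hj, rfl⟩ <;>
          constructor <;> dsimp only <;> omega
      rcases hbonds with rfl | rfl
      · exact ho
      · intro e he
        simp only [closedBonds, List.mem_append, List.mem_cons, List.not_mem_nil,
          or_false] at he
        rcases he with he | rfl | rfl
        · exact ho e he
        · constructor <;> dsimp only <;> omega
        · constructor <;> dsimp only <;> omega
    unfold fermH
    refine Commute.list_sum_right _ _ ?_
    intro t ht
    obtain ⟨e, he, rfl⟩ := List.mem_map.1 ht
    obtain ⟨h1, h2⟩ := hmem e he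
    refine (((((hgb _ h1 e.2.2).mul (hgb _ h2 e.2.2)).smul Complex.I).mul
      (((hgc _ h1).mul (hgc _ h2)).smul Complex.I)).smul
        (J (e.1, e.2.1) : ℂ)).commute ?_
    split_ifs <;> norm_num
end
end

section
/- Let (b_k^x, b_k^y, b_k^z, c_k) be a Majorana family indexed by the vertices of the ladder, and let C = (i_1, …, i_ℓ) be a loop of distinct vertices joined by consecutive bonds, the bond (i_k, i_{k+1}) having type t_k (indices mod ℓ). Setting σ̃_m^α = i b_m^α c_m and u_{i_k i_{k+1}} = i b_{i_k}^{t_k} b_{i_{k+1}}^{t_k}, one has the identity i^{ℓ+2} (σ̃_{i_1}^{t_1} σ̃_{i_2}^{t_1})(σ̃_{i_2}^{t_2} σ̃_{i_3}^{t_2}) ⋯ (σ̃_{i_ℓ}^{t_ℓ} σ̃_{i_1}^{t_ℓ}) = −u_{i_1 i_2} u_{i_2 i_3} ⋯ u_{i_ℓ i_1}; moreover this operator commutes with γ_m^5 = b_m^x b_m^y b_m^z c_m for every vertex m. -/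
noncomputable section
open scoped Classical

/-- Moving an operator past a product of four others, collecting the signs. -/
lemma aux_pass_four {A : Type*} [Ring A] [Algebra ℂ A] (a x y z w : A) (p q r s : ℂ)
    (hx : a * x = p • (x * a)) (hy : a * y = q • (y * a)) (hz : a * z = r • (z * a))
    (hw : a * w = s • (w * a)) :
    a * (x * y * z * w) = (p * q * r * s) • (x * y * z * w * a) := by
  calc a * (x * y * z * w) = (a * x) * y * z * w := by simp only [mul_assoc]
    _ = p • (x * (a * y) * z * w) := by rw [hx]; simp only [mul_assoc, smul_mul_assoc]
    _ = (p * q) • (x * y * (a * z) * w) := by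
        rw [hy]; simp only [mul_assoc, smul_mul_assoc, mul_smul_comm, smul_smul]
    _ = (p * q * r) • (x * y * z * (a * w)) := by
        rw [hz]; simp only [mul_assoc, smul_mul_assoc, mul_smul_comm, smul_smul]
    _ = _ := by
        rw [hw]; simp only [mul_assoc, mul_smul_comm, smul_smul]

/-- The Clifford relations of the ladder, in the form used below. -/
structure AuxCliff {A : Type*} [Ring A] [Algebra ℂ A] (M : ℕ)
    (b : ℕ → BondType → A) (c : ℕ → A) : Prop where
  bb : ∀ i < M, ∀ j < M, ∀ α β, (i ≠ j ∨ α ≠ β) → b i α * b j β = -(b j β * b i α)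
  bc : ∀ i < M, ∀ j < M, ∀ α, b i α * c j = -(c j * b i α)
  cc : ∀ i < M, c i * c i = 1

/-- The sign of `b_i` with respect to `γ_m`. -/
def auxSign (m i : ℕ) : ℂ := if i = m then -1 else 1

lemma auxSign_sq (m i : ℕ) : auxSign m i * auxSign m i = 1 := by
  unfold auxSign; split_ifs <;> norm_num

section aux

variable {A : Type*} [Ring A] [Algebra ℂ A] {M : ℕ} {b : ℕ → BondType → A} {c : ℕ → A}

lemma aux_b_gamma (h : AuxCliff M b c) (m i : ℕ) (hm : m < M) (hi : i < M) (α : BondType) :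
    b i α * gamma5 b c m = auxSign m i • (gamma5 b c m * b i α) := by
  have hb : ∀ β, b i α * b m β =
      (if i = m ∧ α = β then (1 : ℂ) else -1) • (b m β * b i α) := by
    intro β
    split_ifs with hh
    · obtain ⟨rfl, rfl⟩ := hh
      simp
    · rw [h.bb i hi m hm α β (by tauto)]; simp
  have hc : b i α * c m = (-1 : ℂ) • (c m * b i α) := by
    rw [h.bc i hi m hm]; simp
  unfold gamma5
  rw [aux_pass_four _ _ _ _ _ _ _ _ _ (hb _) (hb _) (hb _) hc]
  congr 1
  unfold auxSign
  by_cases him : i = m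
  · cases α <;> simp [him]
  · simp [him]

lemma aux_u_gamma (h : AuxCliff M b c) (m i j : ℕ) (hm : m < M) (hi : i < M) (hj : j < M)
    (α : BondType) :
    uOp b (i, j, α) * gamma5 b c m =
      (auxSign m i * auxSign m j) • (gamma5 b c m * uOp b (i, j, α)) := by
  unfold uOp
  simp only [smul_mul_assoc, mul_smul_comm]
  rw [mul_assoc, aux_b_gamma h m j hm hj, mul_smul_comm, ← mul_assoc, aux_b_gamma h m i hm hi,
    smul_mul_assoc, mul_assoc]
  simp only [smul_smul]
  congr 1
  ring

lemma aux_u_c (h : AuxCliff M b c) (m i j : ℕ) (hm : m < M) (hi : i < M) (hj : j < M)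
    (α : BondType) : c m * uOp b (i, j, α) = uOp b (i, j, α) * c m := by
  unfold uOp
  simp only [smul_mul_assoc, mul_smul_comm]
  rw [mul_assoc, h.bc j hj m hm, mul_neg, ← mul_assoc (b i α), h.bc i hi m hm, neg_mul, neg_neg,
    mul_assoc]

lemma aux_sigma (h : AuxCliff M b c) (i j : ℕ) (hi : i < M) (hj : j < M)
    (α : BondType) : sigmaOp b c i α * sigmaOp b c j α =
      (-Complex.I) • (uOp b (i, j, α) * (c i * c j)) := by
  have h1 : b i α * c i * (b j α * c j) = -(b i α * b j α * (c i * c j)) := by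
    calc b i α * c i * (b j α * c j) = b i α * (c i * b j α) * c j := by simp only [mul_assoc]
      _ = _ := by
        rw [show c i * b j α = -(b j α * c i) by rw [h.bc j hj i hi, neg_neg]]
        simp only [mul_assoc, mul_neg, neg_mul]
  unfold sigmaOp uOp
  simp only [smul_mul_assoc, mul_smul_comm, smul_smul]
  rw [h1]
  simp

lemma aux_path_sigma (h : AuxCliff M b c) (w : ℕ → ℕ) (t : ℕ → BondType)
    (hw : ∀ k, w k < M) (n : ℕ) :
    ((List.range n).map fun k => sigmaOp b c (w k) (t k) * sigmaOp b c (w (k + 1)) (t k)).prod =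
      (-Complex.I) ^ n •
        (((List.range n).map fun k => uOp b (w k, w (k + 1), t k)).prod * (c (w 0) * c (w n))) := by
  induction n with
  | zero => simp [h.cc _ (hw 0)]
  | succ n ih =>
    rw [List.range_succ, List.map_append, List.map_append, List.prod_append, List.prod_append, ih]
    simp only [List.map_cons, List.map_nil, List.prod_cons, List.prod_nil, mul_one]
    rw [aux_sigma h _ _ (hw n) (hw (n + 1))]
    generalize ((List.range n).map fun k => uOp b (w k, w (k + 1), t k)).prod = P
    have e : P * (c (w 0) * c (w n)) *
        (uOp b (w n, w (n + 1), t n) * (c (w n) * c (w (n + 1)))) =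
        P * uOp b (w n, w (n + 1), t n) * (c (w 0) * c (w (n + 1))) := by
      have h0 := aux_u_c h (w 0) (w n) (w (n + 1)) (hw _) (hw _) (hw _) (t n)
      have h1 := aux_u_c h (w n) (w n) (w (n + 1)) (hw _) (hw _) (hw _) (t n)
      have h2 := h.cc _ (hw n)
      generalize uOp b (w n, w (n + 1), t n) = U at *
      calc _ = P * (c (w 0) * (c (w n) * U) * (c (w n) * c (w (n + 1)))) := by
            simp only [mul_assoc]
        _ = P * ((c (w 0) * U) * (c (w n) * c (w n)) * c (w (n + 1))) := by
            rw [h1]; simp only [mul_assoc]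
        _ = _ := by rw [h2, h0]; simp only [mul_assoc, one_mul]
    rw [smul_mul_assoc, mul_smul_comm, smul_smul, e, pow_succ]

lemma aux_path_gamma (h : AuxCliff M b c) (w : ℕ → ℕ) (t : ℕ → BondType)
    (hw : ∀ k, w k < M) (m : ℕ) (hm : m < M) (n : ℕ) :
    ((List.range n).map fun k => uOp b (w k, w (k + 1), t k)).prod * gamma5 b c m =
      (auxSign m (w 0) * auxSign m (w n)) •
        (gamma5 b c m * ((List.range n).map fun k => uOp b (w k, w (k + 1), t k)).prod) := by
  induction n with
  | zero => simp [auxSign_sq]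
  | succ n ih =>
    rw [List.range_succ, List.map_append, List.prod_append]
    simp only [List.map_cons, List.map_nil, List.prod_cons, List.prod_nil, mul_one]
    rw [mul_assoc, aux_u_gamma h m _ _ hm (hw n) (hw (n + 1)), mul_smul_comm, ← mul_assoc, ih,
      smul_mul_assoc, smul_smul, mul_assoc (gamma5 b c m)]
    congr 1
    linear_combination (auxSign m (w 0) * auxSign m (w (n + 1))) * auxSign_sq m (w n)

end aux

lemma aux_cliff_of_majorana {V : Type*} [NormedAddCommGroup V] [InnerProductSpace ℂ V]
    [FiniteDimensional ℂ V] (N : ℕ) (b : ℕ → BondType → (V →ₗ[ℂ] V)) (c : ℕ → (V →ₗ[ℂ] V))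
    (hbc : IsLadderMajorana N b c) : AuxCliff (4 * N) b c := by
  obtain ⟨-, h⟩ := hbc
  refine ⟨?_, ?_, ?_⟩
  · intro i hi j hj α β hne
    have := h (⟨i, hi⟩, some α) (⟨j, hj⟩, some β)
    rw [if_neg (by simp only [Prod.mk.injEq, Fin.mk.injEq, Option.some.injEq]; tauto)] at this
    exact eq_neg_of_add_eq_zero_left this
  · intro i hi j hj α
    have := h (⟨i, hi⟩, some α) (⟨j, hj⟩, none)
    rw [if_neg (by simp)] at this
    exact eq_neg_of_add_eq_zero_left this
  · intro i hi
    have := h (⟨i, hi⟩, none) (⟨i, hi⟩, none)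
    rw [if_pos rfl] at this
    change c i * c i + c i * c i = _ at this
    rw [← two_smul ℂ (c i * c i)] at this
    exact smul_right_injective _ (two_ne_zero) this

lemma aux_bond_lt (N : ℕ) (hN : 2 ≤ N) (bonds : List (ℕ × ℕ × BondType))
    (hbonds : bonds = openBonds N ∨ bonds = closedBonds N) (i j : ℕ) (α : BondType)
    (h : (i, j, α) ∈ bonds) : i < 4 * N ∧ j < 4 * N := by
  rcases hbonds with rfl | rfl <;>
  · simp only [closedBonds, openBonds, List.mem_append, List.mem_map, List.mem_range,
      Prod.mk.injEq, List.mem_cons, List.not_mem_nil, or_false] at h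
    grind

/-- Let `(b_k^x, b_k^y, b_k^z, c_k)` be a Majorana family indexed by
the vertices of the (open or closed) ladder and let `C = (i_1, …, i_ℓ)` be a loop of
the ladder, the bond `(i_k, i_{k+1})` having type `t_k`. Setting
`σ̃_m^α = i b_m^α c_m` and `u_{i_k i_{k+1}} = i b_{i_k}^{t_k} b_{i_{k+1}}^{t_k}`, one
has `i^{ℓ+2} (σ̃_{i_1}^{t_1} σ̃_{i_2}^{t_1}) ⋯ (σ̃_{i_ℓ}^{t_ℓ} σ̃_{i_1}^{t_ℓ})
 = -u_{i_1 i_2} u_{i_2 i_3} ⋯ u_{i_ℓ i_1}`; moreover this operator commutes with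
`γ_m^5 = b_m^x b_m^y b_m^z c_m` for every vertex `m`. -/
theorem vortex_fermionic_representation
    {V : Type*} [NormedAddCommGroup V] [InnerProductSpace ℂ V]
    [FiniteDimensional ℂ V] [Nontrivial V]
    (N : ℕ) (hN : 2 ≤ N)
    (bonds : List (ℕ × ℕ × BondType))
    (hbonds : bonds = openBonds N ∨ bonds = closedBonds N)
    (b : ℕ → BondType → (V →ₗ[ℂ] V)) (c : ℕ → (V →ₗ[ℂ] V))
    (hbc : IsLadderMajorana N b c)
    (L : Loop) (hL : L.IsLoopOf bonds) :
    Complex.I ^ (L.len + 2) •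
        ((List.range L.len).map fun k =>
          sigmaOp b c (L.v k) (L.t k) *
            sigmaOp b c (L.v ((k + 1) % L.len)) (L.t k)).prod =
      vortexOp b L ∧
    ∀ m < 4 * N, Commute (vortexOp b L) (gamma5 b c m) := by
  have hC := aux_cliff_of_majorana N b c hbc
  obtain ⟨hlen, -, hL⟩ := hL
  have hpos : 0 < L.len := by omega
  have hw : ∀ k, L.v (k % L.len) < 4 * N := by
    intro k
    rcases hL (k % L.len) (Nat.mod_lt _ hpos) with h | h
    · exact (aux_bond_lt N hN bonds hbonds _ _ _ h).1
    · exact (aux_bond_lt N hN bonds hbonds _ _ _ h).2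
  have hu : vortexOp b L = -((List.range L.len).map fun k =>
      uOp b (L.v (k % L.len), L.v ((k + 1) % L.len), L.t k)).prod := by
    unfold vortexOp
    congr 2
    apply List.map_congr_left
    intro k hk
    rw [Nat.mod_eq_of_lt (List.mem_range.1 hk)]
  constructor
  · have hs : ((List.range L.len).map fun k => sigmaOp b c (L.v k) (L.t k) *
          sigmaOp b c (L.v ((k + 1) % L.len)) (L.t k)) =
        (List.range L.len).map fun k => sigmaOp b c (L.v (k % L.len)) (L.t k) *
          sigmaOp b c (L.v ((k + 1) % L.len)) (L.t k) := by
      apply List.map_congr_left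
      intro k hk
      rw [Nat.mod_eq_of_lt (List.mem_range.1 hk)]
    rw [hs, hu, aux_path_sigma hC (fun k => L.v (k % L.len)) L.t hw L.len]
    simp only [Nat.mod_self, Nat.zero_mod]
    have h0 := hw 0
    rw [Nat.zero_mod] at h0
    rw [hC.cc _ h0, mul_one, smul_smul]
    have : Complex.I ^ (L.len + 2) * (-Complex.I) ^ L.len = -1 := by
      rw [pow_add, mul_right_comm, ← mul_pow]
      simp
    rw [this, neg_one_smul]
  · intro m hm
    rw [hu]
    apply Commute.neg_left
    have := aux_path_gamma hC (fun k => L.v (k % L.len)) L.t hw m hm L.len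
    simp only [Nat.mod_self, Nat.zero_mod, auxSign_sq, one_smul] at this
    exact this
end
end

section
/- For the open or closed ladder of length N with real couplings J_{(ij)} and a Majorana family (b_k^x, b_k^y, b_k^z, c_k) indexed by the vertices, the fermionic vortex operators B̃(C) = −u_{i_1 i_2} u_{i_2 i_3} ⋯ u_{i_ℓ i_1} associated to loops C = (i_1,…,i_ℓ) satisfy: each B̃(C) is self-adjoint with B̃(C)² = I (so its eigenvalues lie in {±1}); B̃(C) B̃(C′) = B̃(C′) B̃(C) for any two loops C, C′; and B̃(C) commutes with the fermionic ladder Hamiltonian H̃. -/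
noncomputable section
open scoped Classical

theorem bonds_vertex {N : ℕ} (hN : 2 ≤ N) {bonds : List (ℕ × ℕ × BondType)}
    (hbonds : bonds = openBonds N ∨ bonds = closedBonds N) {i j : ℕ} {t : BondType}
    (h : (i, j, t) ∈ bonds) : i < 4 * N ∧ j < 4 * N ∧ i ≠ j := by
  rcases hbonds with rfl | rfl <;> cases t <;>
    simp [openBonds, closedBonds] at h <;> grind

theorem bonds_share {N : ℕ} (hN : 2 ≤ N) {bonds : List (ℕ × ℕ × BondType)}
    (hbonds : bonds = openBonds N ∨ bonds = closedBonds N) {i j k l : ℕ} {t : BondType}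
    (h : (i, j, t) ∈ bonds) (h' : (k, l, t) ∈ bonds) :
    (i = k ∧ j = l) ∨ (i ≠ k ∧ i ≠ l ∧ j ≠ k ∧ j ≠ l) := by
  rcases hbonds with rfl | rfl <;> cases t <;>
    simp [openBonds, closedBonds] at h h' <;> grind

/-- A product of two operators commutes with a product of two operators that anticommute
with both of them. -/
theorem pair_commute {A : Type*} [Ring A] {a a' d d' : A}
    (h1 : a * d = -(d * a)) (h2 : a * d' = -(d' * a))
    (h3 : a' * d = -(d * a')) (h4 : a' * d' = -(d' * a')) :
    Commute (a * a') (d * d') := by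
  have e1 : Commute (a * a') d := by
    show a * a' * d = d * (a * a')
    rw [mul_assoc, h3, mul_neg, ← mul_assoc, h1]; noncomm_ring
  have e2 : Commute (a * a') d' := by
    show a * a' * d' = d' * (a * a')
    rw [mul_assoc, h4, mul_neg, ← mul_assoc, h2]; noncomm_ring
  exact e1.mul_right e2

theorem list_prod_props {A : Type*} [Ring A] [StarRing A] (l : List A)
    (hs : ∀ a ∈ l, IsSelfAdjoint a) (h1 : ∀ a ∈ l, a * a = 1)
    (hc : ∀ a ∈ l, ∀ a' ∈ l, Commute a a') :
    IsSelfAdjoint l.prod ∧ l.prod * l.prod = 1 := by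
  induction l with
  | nil => simp
  | cons a l ih =>
    obtain ⟨i1, i2⟩ := ih (fun x hx => hs x (by simp [hx])) (fun x hx => h1 x (by simp [hx]))
      (fun x hx y hy => hc x (by simp [hx]) y (by simp [hy]))
    have hcom : Commute a l.prod :=
      Commute.list_prod_right _ _ fun x hx => hc a (by simp) x (by simp [hx])
    rw [List.prod_cons]
    refine ⟨(hs a (by simp)).commute_iff i1 |>.1 hcom, ?_⟩
    rw [hcom.symm.mul_mul_mul_comm, h1 a (by simp), i2, one_mul]

section Ladder

variable {V : Type*} [NormedAddCommGroup V] [InnerProductSpace ℂ V] [FiniteDimensional ℂ V]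
  {N : ℕ} {b : ℕ → BondType → (V →ₗ[ℂ] V)} {c : ℕ → (V →ₗ[ℂ] V)}

theorem gen_sq (hbc : IsLadderMajorana N b c) {i : ℕ} (hi : i < 4 * N) (t : BondType) :
    b i t * b i t = 1 := by
  have h := hbc.2 (⟨i, hi⟩, some t) (⟨i, hi⟩, some t)
  simp only [ladderGen, if_true] at h
  rw [← two_smul ℂ] at h
  exact smul_right_injective _ (two_ne_zero) h

theorem gen_bb (hbc : IsLadderMajorana N b c) {i j : ℕ} (hi : i < 4 * N) (hj : j < 4 * N)
    (t s : BondType) (h : i ≠ j ∨ t ≠ s) : b i t * b j s = -(b j s * b i t) := by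
  have h := hbc.2 (⟨i, hi⟩, some t) (⟨j, hj⟩, some s)
  rw [if_neg (by simp; tauto)] at h
  exact eq_neg_of_add_eq_zero_left h

theorem gen_bc (hbc : IsLadderMajorana N b c) {i j : ℕ} (hi : i < 4 * N) (hj : j < 4 * N)
    (t : BondType) : b i t * c j = -(c j * b i t) := by
  have h := hbc.2 (⟨i, hi⟩, some t) (⟨j, hj⟩, none)
  rw [if_neg (by simp)] at h
  exact eq_neg_of_add_eq_zero_left h

theorem gen_sa (hbc : IsLadderMajorana N b c) {i : ℕ} (hi : i < 4 * N) (t : BondType) :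
    star (b i t) = b i t := hbc.1 (⟨i, hi⟩, some t)

theorem uOp_sa (hbc : IsLadderMajorana N b c) {i j : ℕ} (hi : i < 4 * N) (hj : j < 4 * N)
    (hij : i ≠ j) (t : BondType) : IsSelfAdjoint (uOp b (i, j, t)) := by
  have hs : ∀ T : V →ₗ[ℂ] V, star (Complex.I • T) = -(Complex.I • star T) := by
    intro T
    simp [LinearMap.star_eq_adjoint]
  unfold IsSelfAdjoint uOp
  simp only
  rw [hs, star_mul, gen_sa hbc hi, gen_sa hbc hj,
    gen_bb hbc hj hi t t (Or.inl hij.symm), smul_neg, neg_neg]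

theorem uOp_sq (hbc : IsLadderMajorana N b c) {i j : ℕ} (hi : i < 4 * N) (hj : j < 4 * N)
    (hij : i ≠ j) (t : BondType) : uOp b (i, j, t) * uOp b (i, j, t) = 1 := by
  unfold uOp
  simp only
  rw [smul_mul_smul_comm, Complex.I_mul_I]
  have : b i t * b j t * (b i t * b j t) = -1 := by
    rw [mul_assoc, ← mul_assoc (b j t), gen_bb hbc hj hi t t (Or.inl hij.symm), neg_mul,
      mul_assoc (b i t), gen_sq hbc hj, mul_one, mul_neg, gen_sq hbc hi]
  rw [this]; simp

theorem uOp_swap (hbc : IsLadderMajorana N b c) {i j : ℕ} (hi : i < 4 * N) (hj : j < 4 * N)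
    (hij : i ≠ j) (t : BondType) : uOp b (j, i, t) = -uOp b (i, j, t) := by
  unfold uOp
  simp only
  rw [gen_bb hbc hj hi t t (Or.inl hij.symm), smul_neg]

theorem uOp_comm {bonds : List (ℕ × ℕ × BondType)} (hN : 2 ≤ N)
    (hbonds : bonds = openBonds N ∨ bonds = closedBonds N)
    (hbc : IsLadderMajorana N b c) {e f : ℕ × ℕ × BondType}
    (he : e ∈ bonds) (hf : f ∈ bonds) : Commute (uOp b e) (uOp b f) := by
  obtain ⟨i, j, t⟩ := e
  obtain ⟨k, l, s⟩ := f
  obtain ⟨hi, hj, hij⟩ := bonds_vertex hN hbonds he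
  obtain ⟨hk, hl, hkl⟩ := bonds_vertex hN hbonds hf
  have main : (i ≠ k ∨ t ≠ s) → (i ≠ l ∨ t ≠ s) → (j ≠ k ∨ t ≠ s) → (j ≠ l ∨ t ≠ s) →
      Commute (uOp b (i, j, t)) (uOp b (k, l, s)) := by
    intro h1 h2 h3 h4
    unfold uOp
    exact ((pair_commute (gen_bb hbc hi hk t s h1) (gen_bb hbc hi hl t s h2)
      (gen_bb hbc hj hk t s h3) (gen_bb hbc hj hl t s h4)).smul_left _).smul_right _
  by_cases hts : t = s
  · subst hts
    rcases bonds_share hN hbonds he hf with ⟨rfl, rfl⟩ | ⟨h1, h2, h3, h4⟩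
    · exact Commute.refl _
    · exact main (Or.inl h1) (Or.inl h2) (Or.inl h3) (Or.inl h4)
  · exact main (Or.inr hts) (Or.inr hts) (Or.inr hts) (Or.inr hts)

theorem vortex_commute {bonds : List (ℕ × ℕ × BondType)} (hN : 2 ≤ N)
    (hbonds : bonds = openBonds N ∨ bonds = closedBonds N)
    (hbc : IsLadderMajorana N b c) {L : Loop} (hL : L.IsLoopOf bonds) {X : V →ₗ[ℂ] V}
    (hX : ∀ e ∈ bonds, Commute (uOp b e) X) :
    (∀ a ∈ (List.range L.len).map fun k => uOp b (L.v k, L.v ((k + 1) % L.len), L.t k),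
      Commute a X) ∧ Commute (vortexOp b L) X := by
  have key : ∀ a ∈ (List.range L.len).map
      fun k => uOp b (L.v k, L.v ((k + 1) % L.len), L.t k), Commute a X := by
    intro a ha
    simp only [List.mem_map, List.mem_range] at ha
    obtain ⟨k, hk, rfl⟩ := ha
    rcases hL.2.2 k hk with h | h
    · exact hX _ h
    · obtain ⟨h1, h2, h3⟩ := bonds_vertex hN hbonds h
      rw [uOp_swap hbc h1 h2 h3]
      exact (hX _ h).neg_left
  exact ⟨key, (Commute.list_prod_left _ _ key).neg_left⟩

end Ladder

/-- For the open or closed ladder of length `N` with real couplings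
and a Majorana family indexed by the vertices, the fermionic vortex operators
`B̃(C) = -u_{i₁i₂} ⋯ u_{i_ℓ i₁}` of loops `C` of the ladder are self-adjoint with
square `I` (hence eigenvalues `±1`), mutually commute, and commute with the
fermionic ladder Hamiltonian `H̃`. -/
theorem vortex_operator_properties
    {V : Type*} [NormedAddCommGroup V] [InnerProductSpace ℂ V]
    [FiniteDimensional ℂ V] [Nontrivial V]
    (N : ℕ) (hN : 2 ≤ N)
    (bonds : List (ℕ × ℕ × BondType))
    (hbonds : bonds = openBonds N ∨ bonds = closedBonds N)
    (J : ℕ × ℕ → ℝ)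
    (b : ℕ → BondType → (V →ₗ[ℂ] V)) (c : ℕ → (V →ₗ[ℂ] V))
    (hbc : IsLadderMajorana N b c) :
    ∀ L : Loop, L.IsLoopOf bonds →
      IsSelfAdjoint (vortexOp b L) ∧
      vortexOp b L * vortexOp b L = 1 ∧
      (∀ L' : Loop, L'.IsLoopOf bonds →
        vortexOp b L * vortexOp b L' = vortexOp b L' * vortexOp b L) ∧
      Commute (vortexOp b L) (fermH J b c bonds) := by
  intro L hL
  have hcomX : ∀ L' : Loop, L'.IsLoopOf bonds → ∀ e ∈ bonds,
      (∀ a ∈ (List.range L'.len).map fun k => uOp b (L'.v k, L'.v ((k + 1) % L'.len), L'.t k),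
        Commute a (uOp b e)) ∧ Commute (vortexOp b L') (uOp b e) := fun L' hL' e he =>
    vortex_commute hN hbonds hbc hL' fun f hf => uOp_comm hN hbonds hbc hf he
  have hend : ∀ k < L.len, L.v k < 4 * N ∧ L.v ((k + 1) % L.len) < 4 * N ∧
      L.v k ≠ L.v ((k + 1) % L.len) := by
    intro k hk
    rcases hL.2.2 k hk with h | h
    · exact bonds_vertex hN hbonds h
    · obtain ⟨h1, h2, h3⟩ := bonds_vertex hN hbonds h
      exact ⟨h2, h1, h3.symm⟩
  obtain ⟨hsa, hsq⟩ := list_prod_props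
    ((List.range L.len).map fun k => uOp b (L.v k, L.v ((k + 1) % L.len), L.t k))
    (by
      intro a ha
      simp only [List.mem_map, List.mem_range] at ha
      obtain ⟨k, hk, rfl⟩ := ha
      obtain ⟨h1, h2, h3⟩ := hend k hk
      exact uOp_sa hbc h1 h2 h3 _)
    (by
      intro a ha
      simp only [List.mem_map, List.mem_range] at ha
      obtain ⟨k, hk, rfl⟩ := ha
      obtain ⟨h1, h2, h3⟩ := hend k hk
      exact uOp_sq hbc h1 h2 h3 _)
    (fun a ha a' ha' => ((vortex_commute hN hbonds hbc hL
      fun f hf => ((hcomX L hL f hf).1 a ha).symm).1 a' ha').symm)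
  refine ⟨hsa.neg, ?_, ?_, ?_⟩
  · unfold vortexOp
    rw [neg_mul_neg, hsq]
  · intro L' hL'
    exact (vortex_commute hN hbonds hbc hL fun f hf => (hcomX L' hL' f hf).2.symm).2
  · unfold fermH
    refine Commute.list_sum_right _ _ ?_
    intro x hx
    obtain ⟨⟨i, j, t⟩, he, rfl⟩ := List.mem_map.1 hx
    obtain ⟨hi, hj, hij⟩ := bonds_vertex hN hbonds he
    unfold bondTerm
    refine (Commute.mul_right (hcomX L hL _ he).2 ?_).smul_right _
    refine Commute.smul_right ?_ _
    refine (vortex_commute hN hbonds hbc hL ?_).2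
    rintro ⟨k, l, s⟩ hf
    obtain ⟨hk, hl, hkl⟩ := bonds_vertex hN hbonds hf
    exact (pair_commute (gen_bc hbc hk hi s) (gen_bc hbc hk hj s)
      (gen_bc hbc hl hi s) (gen_bc hbc hl hj s)).smul_left _
end
end

section
/- Let V be a nonzero finite-dimensional complex inner product space, H a self-adjoint operator on V, and γ_1, …, γ_n self-adjoint operators with γ_j² = I that mutually commute and each commute with H. Suppose that for each j = 1,…,n there is an invertible operator Q_j on V that commutes with H, commutes with γ_k for every k ≠ j, and anticommutes with γ_j. Let P = ∏_{j=1}^n (I + γ_j)/2. Then the range of P is a nonzero H-invariant subspace, and the set of eigenvalues of H equals the set of eigenvalues of the restriction of H to the range of P. -/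
noncomputable section

/-- Let `V` be a nonzero finite-dimensional complex inner product
space, `H` a self-adjoint operator on `V`, and `γ_1, …, γ_n` self-adjoint commuting
involutions, each commuting with `H`. Suppose for each `j` there is an invertible
operator `Q_j` commuting with `H` and with every `γ_k` (`k ≠ j`) and anticommuting
with `γ_j`. Let `P = ∏_j (I + γ_j)/2` be the projection onto the joint `+1`
eigenspace. Then the range of `P` is a nonzero `H`-invariant subspace, and the
eigenvalues of `H` coincide with the eigenvalues of the restriction of `H` to the
range of `P`. -/
theorem eigenvalues_eq_eigenvalues_on_projected_subspace
    {V : Type*} [NormedAddCommGroup V] [InnerProductSpace ℂ V]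
    [FiniteDimensional ℂ V] [Nontrivial V]
    (n : ℕ) (H : V →ₗ[ℂ] V) (hH : IsSelfAdjoint H)
    (γ : Fin n → (V →ₗ[ℂ] V))
    (hγsa : ∀ j, IsSelfAdjoint (γ j))
    (hγ2 : ∀ j, γ j * γ j = 1)
    (hγcomm : ∀ j k, Commute (γ j) (γ k))
    (hγH : ∀ j, Commute (γ j) H)
    (hQ : ∀ j : Fin n, ∃ Q : V →ₗ[ℂ] V, IsUnit Q ∧ Commute Q H ∧
      (∀ k, k ≠ j → Commute Q (γ k)) ∧ Q * γ j = -(γ j * Q))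
    (P : V →ₗ[ℂ] V)
    (hP : P = (List.ofFn fun j : Fin n => (2 : ℂ)⁻¹ • (1 + γ j)).prod) :
    LinearMap.range P ≠ ⊥ ∧
      ∃ hinv : ∀ x ∈ LinearMap.range P, H x ∈ LinearMap.range P,
        {μ : ℂ | Module.End.HasEigenvalue H μ} =
          {μ : ℂ | Module.End.HasEigenvalue (LinearMap.restrict H hinv) μ} := by
  have key : ∀ μ : ℂ, Module.End.HasEigenvalue H μ →
      ∃ w : V, w ≠ 0 ∧ H w = μ • w ∧ P w = w := by
    intro μ hμ
    have h1 : ∀ s : Finset (Fin n), ∃ w : V, w ≠ 0 ∧ H w = μ • w ∧ ∀ j ∈ s, γ j w = w := by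
      intro s
      induction s using Finset.induction_on with
      | empty =>
        obtain ⟨v, hv⟩ := hμ.exists_hasEigenvector
        exact ⟨v, hv.2, hv.apply_eq_smul, by simp⟩
      | insert a s ha ih =>
        obtain ⟨w, hw0, hwH, hws⟩ := ih
        by_cases hu : w + γ a w = 0
        · obtain ⟨Q, hQu, hQH, hQk, hQa⟩ := hQ a
          have hγw : γ a w = -w := by
            rw [add_comm] at hu
            exact eq_neg_of_add_eq_zero_left hu
          refine ⟨Q w, ?_, ?_, ?_⟩
          · intro h0
            obtain ⟨U, rfl⟩ := hQu
            have h2 : ((↑U⁻¹ : V →ₗ[ℂ] V) * (↑U : V →ₗ[ℂ] V)) w = w := by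
              rw [Units.inv_mul]; rfl
            rw [Module.End.mul_apply, h0, map_zero] at h2
            exact hw0 h2.symm
          · have h2 := LinearMap.congr_fun hQH.eq w
            simp only [Module.End.mul_apply] at h2
            rw [← h2, hwH, map_smul]
          · intro j hj
            by_cases hja : j = a
            · subst hja
              have h2 := LinearMap.congr_fun hQa w
              simp only [Module.End.mul_apply, LinearMap.neg_apply, hγw, map_neg] at h2
              exact (neg_injective h2).symm
            · have h2 := LinearMap.congr_fun (hQk j hja).eq w
              simp only [Module.End.mul_apply] at h2
              rw [← h2, hws j ((Finset.mem_insert.1 hj).resolve_left hja)]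
        · refine ⟨w + γ a w, hu, ?_, ?_⟩
          · have h2 := LinearMap.congr_fun (hγH a).eq w
            simp only [Module.End.mul_apply] at h2
            rw [map_add, ← h2, hwH, map_smul, smul_add]
          · intro j hj
            by_cases hja : j = a
            · subst hja
              have h2 := LinearMap.congr_fun (hγ2 j) w
              simp only [Module.End.mul_apply, Module.End.one_apply] at h2
              rw [map_add, h2, add_comm]
            · have h2 := LinearMap.congr_fun (hγcomm j a).eq w
              simp only [Module.End.mul_apply] at h2
              rw [map_add, h2, hws j ((Finset.mem_insert.1 hj).resolve_left hja)]
    obtain ⟨w, hw0, hwH, hws⟩ := h1 Finset.univ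
    refine ⟨w, hw0, hwH, ?_⟩
    have h3 : ∀ l : List (V →ₗ[ℂ] V), (∀ f ∈ l, f w = w) → l.prod w = w := by
      intro l
      induction l with
      | nil => intro _; simp
      | cons f l ih =>
        intro h
        rw [List.prod_cons, Module.End.mul_apply, ih fun g hg => h g (List.mem_cons_of_mem _ hg)]
        exact h f List.mem_cons_self
    rw [hP]
    apply h3
    intro f hf
    obtain ⟨j, rfl⟩ := (List.mem_ofFn' _ _).1 hf
    simp only [LinearMap.smul_apply, LinearMap.add_apply, Module.End.one_apply,
      hws j (Finset.mem_univ j)]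
    rw [← two_smul ℂ w, smul_smul]
    norm_num
  have hPH : Commute P H := by
    rw [hP]
    apply Commute.list_prod_left
    intro f hf
    obtain ⟨j, rfl⟩ := (List.mem_ofFn' _ _).1 hf
    exact ((Commute.one_left H).add_left (hγH j)).smul_left _
  refine ⟨?_, ?_, ?_⟩
  · obtain ⟨μ, hμ⟩ := Module.End.exists_eigenvalue H
    obtain ⟨w, hw0, -, hwP⟩ := key μ hμ
    intro hbot
    have hw : w ∈ LinearMap.range P := ⟨w, hwP⟩
    rw [hbot] at hw
    exact hw0 ((Submodule.mem_bot ℂ).1 hw)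
  · rintro x ⟨y, rfl⟩
    have h2 := LinearMap.congr_fun hPH.eq y
    simp only [Module.End.mul_apply] at h2
    exact ⟨H y, h2⟩
  · ext μ
    constructor
    · intro hμ
      obtain ⟨w, hw0, hwH, hwP⟩ := key μ hμ
      refine Module.End.hasEigenvalue_of_hasEigenvector
        (x := (⟨w, ⟨w, hwP⟩⟩ : LinearMap.range P)) ⟨?_, ?_⟩
      · rw [Module.End.mem_eigenspace_iff]
        exact Subtype.ext hwH
      · intro h0
        exact hw0 (congrArg Subtype.val h0)
    · intro hμ
      obtain ⟨v, hv⟩ := Module.End.HasEigenvalue.exists_hasEigenvector hμ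
      refine Module.End.hasEigenvalue_of_hasEigenvector (x := (v : V)) ⟨?_, ?_⟩
      · rw [Module.End.mem_eigenspace_iff]
        exact congrArg Subtype.val hv.apply_eq_smul
      · intro h0
        exact hv.2 (Subtype.ext h0)
end
end

section
/- Consider the closed ladder of length N (N ≥ 2) with all couplings J_{(ij)} nonzero, a Majorana family (b_k^x, b_k^y, b_k^z, c_k) indexed by the vertices, the fermionic ladder Hamiltonian H̃, and γ_k^5 = b_k^x b_k^y b_k^z c_k. Fix a vertex j. Then there is no operator Q of the form Q = λ·M, where λ is a nonzero complex number and M is a product of distinct members of the family {b_k^x, b_k^y, b_k^z, c_k : k = 1,…,4N}, such that Q anticommutes with γ_j^5, commutes with γ_k^5 for every k ≠ j, and commutes with H̃. -/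
noncomputable section
open scoped Classical

theorem aux_mul {A : Type*} [Ring A] [Algebra ℂ A] {M a b : A} {α β : ℂ}
    (ha : M * a = α • (a * M)) (hb : M * b = β • (b * M)) :
    M * (a * b) = (α * β) • (a * b * M) := by
  rw [← mul_assoc, ha, smul_mul_assoc, mul_assoc a M b, hb, mul_smul_comm, smul_smul, mul_assoc]

theorem aux_smul {A : Type*} [Ring A] [Algebra ℂ A] {M a : A} {α : ℂ} (r : ℂ)
    (ha : M * a = α • (a * M)) : M * (r • a) = α • ((r • a) * M) := by
  rw [mul_smul_comm, ha, smul_mul_assoc, smul_comm]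

theorem aux_one {A : Type*} [Ring A] [Algebra ℂ A] [Nontrivial A] {X : A} (hX : IsUnit X) {s : ℂ}
    (h : s • X = 0) : s = 0 := by
  by_contra hs
  exact hX.ne_zero ((smul_eq_zero_iff_right hs).1 h)

theorem aux_sign {A ι : Type*} [Ring A] [Algebra ℂ A] (g : ι → A) (R : ι → Prop)
    (hanti : ∀ p q, R p → R q → p ≠ q → g p * g q = -(g q * g p))
    (q : ι) (hq : R q) (l : List ι) (hl : ∀ p ∈ l, R p) :
    ∃ ε : ℂ, ε * ε = 1 ∧ (l.map g).prod * g q = ε • (g q * (l.map g).prod) := by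
  induction l with
  | nil => exact ⟨1, by simp, by simp⟩
  | cons p l ih =>
    obtain ⟨ε, h1, h2⟩ := ih (fun p hp => hl p (List.mem_cons_of_mem _ hp))
    by_cases hpq : p = q
    · subst hpq
      refine ⟨ε, h1, ?_⟩
      rw [List.map_cons, List.prod_cons, mul_assoc, h2, mul_smul_comm]
    · refine ⟨-ε, by simpa using h1, ?_⟩
      rw [List.map_cons, List.prod_cons, mul_assoc, h2, mul_smul_comm, ← mul_assoc, ← mul_assoc,
        hanti p q (hl p (by simp)) hq hpq]
      simp

theorem aux_unit {A ι : Type*} [Ring A] (g : ι → A) (R : ι → Prop)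
    (hsq : ∀ p, R p → g p * g p = 1) (l : List ι) (hl : ∀ p ∈ l, R p) :
    IsUnit (l.map g).prod := by
  induction l with
  | nil => simp
  | cons p l ih =>
    rw [List.map_cons, List.prod_cons]
    have h := hsq p (hl p (by simp))
    exact (show IsUnit (g p) from ⟨⟨g p, g p, h, h⟩, rfl⟩).mul (ih (fun p hp => hl p (List.mem_cons_of_mem _ hp)))

theorem aux_prodz (F : ℕ → ℂ) (m : ℕ) :
    ((List.range m).map fun j => F (2 * j) * F (2 * j + 1)).prod
      = ∏ k ∈ Finset.range (2 * m), F k := by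
  induction m with
  | zero => simp
  | succ m ih =>
    rw [List.range_succ, List.map_append, List.prod_append, ih, Nat.mul_succ,
      Finset.prod_range_succ, Finset.prod_range_succ]
    simp; ring

theorem aux_prodx (F : ℕ → ℂ) (m : ℕ) :
    ((List.range m).map fun j => F (2 * j + 1) * F (2 * j + 2)).prod * (F (2 * m + 1) * F 0)
      = ∏ k ∈ Finset.range (2 * m + 2), F k := by
  induction m with
  | zero => simp [Finset.prod_range_succ]; ring
  | succ m ih =>
    rw [List.range_succ, List.map_append, List.prod_append, Nat.mul_succ,
      Finset.prod_range_succ, Finset.prod_range_succ, ← ih]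
    simp; ring

theorem aux_prody (F : ℕ → ℂ) (m : ℕ) :
    ((List.range m).map fun j => F (2 * j) * F (2 * j + 3)).prod * (F (2 * m) * F 1)
      = ∏ k ∈ Finset.range (2 * m + 2), F k := by
  induction m with
  | zero => simp [Finset.prod_range_succ]
  | succ m ih =>
    rw [List.range_succ, List.map_append, List.prod_append, Nat.mul_succ,
      Finset.prod_range_succ, Finset.prod_range_succ, ← ih]
    simp; ring

theorem aux_prod_bonds (N : ℕ) (hN : 2 ≤ N) (F : BondType → ℕ → ℂ) :
    ((closedBonds N).map fun e => F e.2.2 e.1 * F e.2.2 e.2.1).prod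
      = ∏ k ∈ Finset.range (4 * N), (F .z k * F .x k * F .y k) := by
  obtain ⟨m, hm⟩ : ∃ m, 2 * N = m + 1 := ⟨2 * N - 1, by omega⟩
  have h4 : 4 * N = 2 * m + 2 := by omega
  have h5 : 4 * N = 2 * (m + 1) := by omega
  have h1 := aux_prodz (F .z) (m + 1)
  have h2 := aux_prodx (F .x) m
  have h3 := aux_prody (F .y) m
  rw [Finset.prod_mul_distrib, Finset.prod_mul_distrib]
  rw [show 2 * (m + 1) = 2 * m + 2 from rfl] at h1
  rw [h4, ← h1, ← h2, ← h3]
  unfold closedBonds openBonds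
  rw [h4, hm]
  simp only [List.map_append, List.prod_append, List.map_map, Function.comp_def, List.map_cons,
    List.map_nil, List.prod_cons, List.prod_nil, Nat.add_sub_cancel, mul_one]
  rw [show 2 * m + 2 - 1 = 2 * m + 1 from rfl]
  ring

theorem aux_bonds_range (N : ℕ) (hN : 2 ≤ N) (e : ℕ × ℕ × BondType) (he : e ∈ closedBonds N) :
    e.1 < 4 * N ∧ e.2.1 < 4 * N ∧ e.1 ≠ e.2.1 := by
  simp only [closedBonds, openBonds, List.mem_append, List.mem_map, List.mem_range,
    List.mem_cons, List.not_mem_nil, or_false] at he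
  rcases he with ((⟨a, ha, rfl⟩ | ⟨a, ha, rfl⟩) | ⟨a, ha, rfl⟩) | rfl | rfl <;>
    refine ⟨?_, ?_, ?_⟩ <;> dsimp only <;> omega

theorem aux_bonds_unique (N : ℕ) (hN : 2 ≤ N) (e f : ℕ × ℕ × BondType) (he : e ∈ closedBonds N)
    (hf : f ∈ closedBonds N) (ht : f.2.2 = e.2.2) (h : f.1 = e.1 ∨ f.2.1 = e.1) : f = e := by
  simp only [closedBonds, openBonds, List.mem_append, List.mem_map, List.mem_range,
    List.mem_cons, List.not_mem_nil, or_false] at he hf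
  rcases he with ((⟨a, ha, rfl⟩ | ⟨a, ha, rfl⟩) | ⟨a, ha, rfl⟩) | rfl | rfl <;>
  rcases hf with ((⟨d, hd, rfl⟩ | ⟨d, hd, rfl⟩) | ⟨d, hd, rfl⟩) | rfl | rfl <;>
  simp only [reduceCtorEq, Prod.mk.injEq, and_true, or_false, false_or, and_false] at ht h ⊢ <;> omega

theorem aux_list_sum {A ι : Type*} [AddCommGroup A] [Module ℂ A] (h : ι → A) (e : ι)
    (l : List ι) (he : e ∈ l) (h0 : ∀ f ∈ l, f ≠ e → h f = 0) (hs : (l.map h).sum = 0) :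
    h e = 0 := by
  have key : ∀ l : List ι, (∀ f ∈ l, f ≠ e → h f = 0) →
      ∃ n : ℕ, (e ∈ l → n ≠ 0) ∧ (l.map h).sum = (n : ℂ) • h e := by
    intro l
    induction l with
    | nil => exact fun _ => ⟨0, by simp, by simp⟩
    | cons p l ih =>
      intro hl
      obtain ⟨n, h1, h2⟩ := ih (fun f hf => hl f (List.mem_cons_of_mem _ hf))
      by_cases hp : p = e
      · subst hp
        refine ⟨n + 1, by simp, ?_⟩
        rw [List.map_cons, List.sum_cons, h2, Nat.cast_succ, add_smul, one_smul, add_comm]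
      · refine ⟨n, ?_, ?_⟩
        · intro hm
          rcases List.mem_cons.1 hm with rfl | hm
          · exact absurd rfl hp
          · exact h1 hm
        · rw [List.map_cons, List.sum_cons, h2, hl p (by simp) hp, zero_add]
  obtain ⟨n, h1, h2⟩ := key l h0
  rw [hs] at h2
  exact (smul_eq_zero_iff_right (Nat.cast_ne_zero.2 (h1 he))).1 h2.symm

theorem aux_main {A : Type*} [Ring A] [Algebra ℂ A] [Nontrivial A]
    (N : ℕ) (hN : 2 ≤ N) (J : ℕ × ℕ → ℝ)
    (hJ : ∀ e ∈ closedBonds N, J (e.1, e.2.1) ≠ 0)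
    (b : ℕ → BondType → A) (c : ℕ → A)
    (hsq : ∀ p : ℕ × Option BondType, p.1 < 4 * N → ladderGen b c p * ladderGen b c p = 1)
    (hanti : ∀ p q : ℕ × Option BondType, p.1 < 4 * N → q.1 < 4 * N → p ≠ q →
      ladderGen b c p * ladderGen b c q = -(ladderGen b c q * ladderGen b c p))
    (j : ℕ) (hj : j < 4 * N) (M : A) (hMu : IsUnit M)
    (hM : ∀ q : ℕ × Option BondType, q.1 < 4 * N →
      ∃ ε : ℂ, ε * ε = 1 ∧ M * ladderGen b c q = ε • (ladderGen b c q * M))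
    (h1 : M * gamma5 b c j = - (gamma5 b c j * M))
    (h2 : ∀ k < 4 * N, k ≠ j → M * gamma5 b c k = gamma5 b c k * M)
    (h3 : M * fermH J b c (closedBonds N) = fermH J b c (closedBonds N) * M) : False := by
  have hM' : ∀ q : ℕ × Option BondType, ∃ ε : ℂ, ε * ε = 1 ∧
      (q.1 < 4 * N → M * ladderGen b c q = ε • (ladderGen b c q * M)) := by
    intro q
    by_cases hq : q.1 < 4 * N
    · obtain ⟨ε, h, h'⟩ := hM q hq
      exact ⟨ε, h, fun _ => h'⟩
    · exact ⟨1, by simp, fun h => absurd h hq⟩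
  choose ε hε hMε using hM'
  have hgu : ∀ p : ℕ × Option BondType, p.1 < 4 * N → IsUnit (ladderGen b c p) := fun p hp =>
    ⟨⟨_, _, hsq p hp, hsq p hp⟩, rfl⟩
  have hb : ∀ k t, b k t = ladderGen b c (k, some t) := fun _ _ => rfl
  have hc : ∀ k, c k = ladderGen b c (k, none) := fun _ => rfl
  -- the on-site signs
  have hγu : ∀ k < 4 * N, IsUnit (gamma5 b c k) := fun k hk =>
    (((hgu (k, some .x) hk).mul (hgu (k, some .y) hk)).mul (hgu (k, some .z) hk)).mul
      (hgu (k, none) hk)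
  have hγ : ∀ k < 4 * N, M * gamma5 b c k = (ε (k, some .x) * ε (k, some .y) * ε (k, some .z)
      * ε (k, none)) • (gamma5 b c k * M) := fun k hk =>
    aux_mul (aux_mul (aux_mul (hMε (k, some .x) hk) (hMε (k, some .y) hk)) (hMε (k, some .z) hk))
      (hMε (k, none) hk)
  have hγj : ε (j, some .x) * ε (j, some .y) * ε (j, some .z) * ε (j, none) = -1 := by
    have h := hγ j hj
    rw [h1] at h
    have := aux_one ((hγu j hj).mul hMu) (s := ε (j, some .x) * ε (j, some .y) * ε (j, some .z)
      * ε (j, none) + 1) (by rw [add_smul, ← h, one_smul]; simp)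
    linear_combination this
  have hγk : ∀ k < 4 * N, k ≠ j →
      ε (k, some .x) * ε (k, some .y) * ε (k, some .z) * ε (k, none) = 1 := by
    intro k hk hkj
    have h := hγ k hk
    rw [h2 k hk hkj] at h
    have := aux_one ((hγu k hk).mul hMu) (s := ε (k, some .x) * ε (k, some .y) * ε (k, some .z)
      * ε (k, none) - 1) (by rw [sub_smul, ← h, one_smul]; simp)
    linear_combination this
  -- the bond signs
  have hT : ∀ e ∈ closedBonds N, M * bondTerm J b c e =
      (ε (e.1, some e.2.2) * ε (e.2.1, some e.2.2) * (ε (e.1, none) * ε (e.2.1, none))) •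
        (bondTerm J b c e * M) := by
    intro e he
    obtain ⟨r1, r2, -⟩ := aux_bonds_range N hN e he
    exact aux_smul _ (aux_mul
      (aux_smul _ (aux_mul (hMε (e.1, some e.2.2) r1) (hMε (e.2.1, some e.2.2) r2)))
      (aux_smul _ (aux_mul (hMε (e.1, none) r1) (hMε (e.2.1, none) r2))))
  have hTu : ∀ e ∈ closedBonds N, IsUnit (bondTerm J b c e) := by
    intro e he
    obtain ⟨r1, r2, -⟩ := aux_bonds_range N hN e he
    have hJe : (J (e.1, e.2.1) : ℂ) ≠ 0 := by exact_mod_cast hJ e he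
    have hsm : ∀ (r : ℂ) (X : A), r ≠ 0 → IsUnit X → IsUnit (r • X) := by
      intro r X hr hX
      rw [Algebra.smul_def]
      exact ((isUnit_iff_ne_zero.2 hr).map (algebraMap ℂ A)).mul hX
    exact hsm _ _ hJe ((hsm _ _ Complex.I_ne_zero
      ((hgu (e.1, some e.2.2) r1).mul (hgu (e.2.1, some e.2.2) r2))).mul
      (hsm _ _ Complex.I_ne_zero ((hgu (e.1, none) r1).mul (hgu (e.2.1, none) r2))))
  -- commutation of the generators with bond terms
  have hgg : ∀ p q : ℕ × Option BondType, p.1 < 4 * N → q.1 < 4 * N → p ≠ q →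
      ladderGen b c p * ladderGen b c q = (-1 : ℂ) • (ladderGen b c q * ladderGen b c p) := by
    intro p q hp hq h
    rw [hanti p q hp hq h]; simp
  have hgT : ∀ e ∈ closedBonds N, ∀ f ∈ closedBonds N, f ≠ e →
      ladderGen b c (e.1, some e.2.2) * bondTerm J b c f =
        bondTerm J b c f * ladderGen b c (e.1, some e.2.2) := by
    intro e he f hf hfe
    obtain ⟨r1, r2, -⟩ := aux_bonds_range N hN f hf
    obtain ⟨s1, s2, -⟩ := aux_bonds_range N hN e he
    have d1 : (e.1, some e.2.2) ≠ (f.1, some f.2.2) := by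
      intro h
      simp only [Prod.mk.injEq, Option.some.injEq] at h
      exact hfe (aux_bonds_unique N hN e f he hf h.2.symm (Or.inl h.1.symm))
    have d2 : (e.1, some e.2.2) ≠ (f.2.1, some f.2.2) := by
      intro h
      simp only [Prod.mk.injEq, Option.some.injEq] at h
      exact hfe (aux_bonds_unique N hN e f he hf h.2.symm (Or.inr h.1.symm))
    have := aux_smul (J (f.1, f.2.1) : ℂ) (aux_mul
      (aux_smul Complex.I (aux_mul (hgg _ _ s1 r1 d1) (hgg _ _ s1 r2 d2)))
      (aux_smul Complex.I (aux_mul (hgg (e.1, some e.2.2) (f.1, none) s1 r1 (by simp))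
        (hgg (e.1, some e.2.2) (f.2.1, none) s1 r2 (by simp)))))
    rw [show (-1 * -1 * (-1 * -1) : ℂ) = 1 by norm_num, one_smul] at this
    exact this
  have hgTe : ∀ e ∈ closedBonds N,
      ladderGen b c (e.1, some e.2.2) * bondTerm J b c e =
        (-1 : ℂ) • (bondTerm J b c e * ladderGen b c (e.1, some e.2.2)) := by
    intro e he
    obtain ⟨s1, s2, s3⟩ := aux_bonds_range N hN e he
    have d2 : (e.1, some e.2.2) ≠ (e.2.1, some e.2.2) := by
      intro h
      simp only [Prod.mk.injEq] at h
      exact s3 h.1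
    have d1 : ladderGen b c (e.1, some e.2.2) * ladderGen b c (e.1, some e.2.2) =
      (1 : ℂ) • (ladderGen b c (e.1, some e.2.2) * ladderGen b c (e.1, some e.2.2)) := by simp
    have := aux_smul (J (e.1, e.2.1) : ℂ) (aux_mul
      (aux_smul Complex.I (aux_mul d1 (hgg _ _ s1 s2 d2)))
      (aux_smul Complex.I (aux_mul (hgg (e.1, some e.2.2) (e.1, none) s1 s1 (by simp))
        (hgg (e.1, some e.2.2) (e.2.1, none) s1 s2 (by simp)))))
    rw [show (1 * -1 * (-1 * -1) : ℂ) = -1 by norm_num] at this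
    exact this
  have hbond : ∀ e ∈ closedBonds N,
      ε (e.1, some e.2.2) * ε (e.2.1, some e.2.2) * (ε (e.1, none) * ε (e.2.1, none)) = 1 := by
    intro e he
    set s : ℕ × ℕ × BondType → ℂ := fun e =>
      ε (e.1, some e.2.2) * ε (e.2.1, some e.2.2) * (ε (e.1, none) * ε (e.2.1, none)) with hs
    set g := ladderGen b c (e.1, some e.2.2) with hg
    set T := bondTerm J b c with hTdef
    have hsum : ((closedBonds N).map fun f => (s f - 1) • T f).sum * M = 0 := by
      have e1 : M * ((closedBonds N).map T).sum = ((closedBonds N).map T).sum * M := h3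
      have e2 : ∀ l : List (ℕ × ℕ × BondType), (∀ f ∈ l, f ∈ closedBonds N) →
          (l.map fun f => (s f - 1) • T f).sum * M = M * (l.map T).sum - (l.map T).sum * M := by
        intro l
        induction l with
        | nil => simp
        | cons f l ih =>
          intro hl
          simp only [List.map_cons, List.sum_cons, add_mul, mul_add]
          rw [ih (fun f hf => hl f (List.mem_cons_of_mem _ hf)), hT f (hl f (by simp)),
            sub_smul, sub_mul, one_smul, smul_mul_assoc]
          abel
      rw [e2 _ (fun _ h => h), e1, sub_self]
    have hsum' : ((closedBonds N).map fun f => (s f - 1) • T f).sum = 0 :=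
      (hMu.mul_left_eq_zero).1 hsum
    have hcomm : ((closedBonds N).map fun f => (s f - 1) • (g * T f - T f * g)).sum = 0 := by
      have e2 : ∀ l : List (ℕ × ℕ × BondType),
          (l.map fun f => (s f - 1) • (g * T f - T f * g)).sum =
            g * (l.map fun f => (s f - 1) • T f).sum - (l.map fun f => (s f - 1) • T f).sum * g := by
        intro l
        induction l with
        | nil => simp
        | cons f l ih =>
          simp only [List.map_cons, List.sum_cons, add_mul, mul_add]
          rw [ih, smul_sub, mul_smul_comm, smul_mul_assoc]
          abel
      rw [e2, hsum']; simp
    have h0 := aux_list_sum _ e _ he (fun f hf hfe => by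
      rw [hgT e he f hf hfe, sub_self, smul_zero]) hcomm
    have h0' : ((s e - 1) * (-2)) • (T e * g) = 0 := by
      rw [← h0, hgTe e he, mul_smul]
      congr 1
      rw [neg_one_smul, neg_smul, two_smul]
      abel
    have := aux_one ((hTu e he).mul (hgu _ (aux_bonds_range N hN e he).1)) h0'
    change s e = 1
    linear_combination (-1 / 2 : ℂ) * this
  -- conclusion
  have hp1 := aux_prod_bonds N hN (fun t k => ε (k, some t) * ε (k, none))
  have hp2 : ((closedBonds N).map fun e => (ε (e.1, some e.2.2) * ε (e.1, none)) *
      (ε (e.2.1, some e.2.2) * ε (e.2.1, none))).prod = 1 := by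
    apply List.prod_eq_one
    intro x hx
    obtain ⟨e, he, rfl⟩ := List.mem_map.1 hx
    rw [← hbond e he]; ring
  have hp3 : ∀ k, (ε (k, some .z) * ε (k, none)) * (ε (k, some .x) * ε (k, none)) *
      (ε (k, some .y) * ε (k, none)) =
      ε (k, some .x) * ε (k, some .y) * ε (k, some .z) * ε (k, none) := by
    intro k
    linear_combination (ε (k, some .x) * ε (k, some .y) * ε (k, some .z) * ε (k, none)) *
      hε (k, none)
  simp only [hp2, hp3] at hp1
  rw [Finset.prod_eq_single j (fun k hk hkj => hγk k (Finset.mem_range.1 hk) hkj)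
    (fun h => absurd (Finset.mem_range.2 hj) h), hγj] at hp1
  norm_num at hp1

/-- For the closed ladder of length `N ≥ 2` with all couplings
nonzero, a Majorana family `(b_k^x, b_k^y, b_k^z, c_k)` indexed by the vertices, the
fermionic ladder Hamiltonian `H̃` and `γ_k^5 = b_k^x b_k^y b_k^z c_k`: for any fixed
vertex `j` there is no operator `Q = λ·M`, with `λ ≠ 0` and `M` a product of distinct
members of the family `{b_k^x, b_k^y, b_k^z, c_k}`, that anticommutes with `γ_j^5`,
commutes with `γ_k^5` for every `k ≠ j`, and commutes with `H̃`. -/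
theorem no_monomial_Q_for_closed_ladder
    {V : Type*} [NormedAddCommGroup V] [InnerProductSpace ℂ V]
    [FiniteDimensional ℂ V] [Nontrivial V]
    (N : ℕ) (hN : 2 ≤ N) (J : ℕ × ℕ → ℝ)
    (hJ : ∀ e ∈ closedBonds N, J (e.1, e.2.1) ≠ 0)
    (b : ℕ → BondType → (V →ₗ[ℂ] V)) (c : ℕ → (V →ₗ[ℂ] V))
    (hbc : IsLadderMajorana N b c)
    (j : ℕ) (hj : j < 4 * N) :
    ¬∃ (lam : ℂ) (l : List (ℕ × Option BondType)),
      lam ≠ 0 ∧ l.Nodup ∧ (∀ p ∈ l, p.1 < 4 * N) ∧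
      AntiCommute (lam • (l.map (ladderGen b c)).prod) (gamma5 b c j) ∧
      (∀ k < 4 * N, k ≠ j →
        Commute (lam • (l.map (ladderGen b c)).prod) (gamma5 b c k)) ∧
      Commute (lam • (l.map (ladderGen b c)).prod) (fermH J b c (closedBonds N)) := by
  rintro ⟨lam, l, hlam, -, hl, h1, h2, h3⟩
  obtain ⟨-, hcl⟩ := hbc
  have hsq : ∀ p : ℕ × Option BondType, p.1 < 4 * N →
      ladderGen b c p * ladderGen b c p = 1 := by
    intro p hp
    have h := hcl (⟨p.1, hp⟩, p.2) (⟨p.1, hp⟩, p.2)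
    simp only [if_true] at h
    rw [← two_smul ℂ] at h
    exact smul_right_injective _ (two_ne_zero (α := ℂ)) h
  have hanti : ∀ p q : ℕ × Option BondType, p.1 < 4 * N → q.1 < 4 * N → p ≠ q →
      ladderGen b c p * ladderGen b c q = -(ladderGen b c q * ladderGen b c p) := by
    intro p q hp hq hpq
    have h := hcl (⟨p.1, hp⟩, p.2) (⟨q.1, hq⟩, q.2)
    rw [if_neg] at h
    · exact eq_neg_of_add_eq_zero_left h
    · intro h'
      simp only [Prod.mk.injEq, Fin.mk.injEq] at h'
      exact hpq (Prod.ext h'.1 h'.2)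
  have hinj := smul_right_injective (V →ₗ[ℂ] V) hlam
  refine aux_main N hN J hJ b c hsq hanti j hj (l.map (ladderGen b c)).prod
    (aux_unit _ (fun p => p.1 < 4 * N) hsq l hl)
    (fun q hq => aux_sign _ (fun p => p.1 < 4 * N) hanti q hq l hl) ?_ ?_ ?_
  · apply hinj
    have h : _ = _ := h1
    simpa only [smul_mul_assoc, mul_smul_comm, smul_neg] using h
  · intro k hk hkj
    apply hinj
    have h := (h2 k hk hkj).eq
    simpa only [smul_mul_assoc, mul_smul_comm] using h
  · apply hinj
    have h := h3.eq
    simpa only [smul_mul_assoc, mul_smul_comm] using h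
end
end
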